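/- For every interval D ⊆ [0,1] and every L ∈ ℝ, the Lebesgue measure of the set {x ∈ D : log q_min(x,δ) > L − (1/2)·log δ} converges, as δ → 0⁺, to Leb(D)·∫_L^∞ η_log(s) ds. -/

import Mathlib

open MeasureTheory Filter

/-- The limiting density of the logarithm of smallest denominators. -/
noncomputable def etaLog (s : ℝ) : ℝ :=
  if s ≤ 0 then 6 / Real.pi ^ 2 * Real.exp (2 * s)
  else if s ≤ Real.log 2 then 6 / Real.pi ^ 2 * (-Real.exp (2 * s) + 2 + 4 * s)
  else 6 / Real.pi ^ 2 * (-Real.exp (2 * s) + 2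
    + 2 * Real.exp (2 * s) * Real.sqrt (1 / 4 - Real.exp (-2 * s))
    - 4 * Real.log (1 / 2 + Real.sqrt (1 / 4 - Real.exp (-2 * s))))

/-- The smallest denominator of all rationals in the interval `(x - δ/2, x + δ/2)`. -/
noncomputable def qmin (x δ : ℝ) : ℕ :=
  sInf {q : ℕ | 0 < q ∧ ∃ p : ℤ, x - δ / 2 < (p : ℝ) / q ∧ (p : ℝ) / q < x + δ / 2}

/-- polynomial versus exponential growth -/
lemma pow_twelve_bound : ∃ K : ℝ, 1 ≤ K ∧ ∀ v : ℕ, ((v : ℝ) + 1) ^ 12 ≤ K * 2 ^ v := by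
  set r : ℝ := (2 : ℝ) ^ ((1 : ℝ) / 12) with hr
  have hr12 : r ^ 12 = 2 := by
    rw [hr, ← Real.rpow_natCast, ← Real.rpow_mul (by norm_num)]; norm_num
  have hr1 : 1 < r := by
    rw [hr]; exact Real.one_lt_rpow (by norm_num) (by norm_num)
  have hr2 : r ≤ 2 := by
    by_contra h
    push Not at h
    have : (2 : ℝ) ^ 12 < r ^ 12 := by gcongr
    rw [hr12] at this; norm_num at this
  set ε := r - 1 with hε
  have hε0 : 0 < ε := by linarith
  have hε1 : ε ≤ 1 := by linarith
  refine ⟨(1 / ε) ^ 12, ?_, ?_⟩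
  · apply one_le_pow₀
    rw [le_div_iff₀ hε0]; linarith
  · intro v
    have h1 : 1 + (v : ℝ) * ε ≤ (1 + ε) ^ v := one_add_mul_le_pow (by linarith) v
    have h2 : ((v : ℝ) + 1) * ε ≤ r ^ v := by
      have : 1 + ε = r := by rw [hε]; ring
      rw [this] at h1
      nlinarith
    have h3 : (((v : ℝ) + 1) * ε) ^ 12 ≤ (r ^ v) ^ 12 := by gcongr
    rw [← pow_mul, mul_comm v 12, pow_mul, hr12, mul_pow] at h3
    rw [div_pow, one_pow, div_mul_eq_mul_div, one_mul, le_div_iff₀ (by positivity)]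
    exact h3

/-- a divisor bound -/
lemma divisor_bound : ∃ C : ℝ, 0 < C ∧ ∀ n : ℕ, n ≠ 0 → (n.divisors.card : ℝ) ^ 12 ≤ C * n := by
  obtain ⟨K, hK1, hK⟩ := pow_twelve_bound
  refine ⟨K ^ 4096, by positivity, ?_⟩
  intro n hn
  rw [Nat.card_divisors hn]
  have hfac : (n : ℝ) = ∏ p ∈ n.primeFactors, (p : ℝ) ^ (n.factorization p) := by
    conv_lhs => rw [← Nat.prod_factorization_pow_eq_self hn]
    rw [Finsupp.prod]; push_cast; rfl
  have step : ∀ p ∈ n.primeFactors, ((n.factorization p : ℝ) + 1) ^ 12 ≤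
      (if p < 4096 then K else 1) * (p : ℝ) ^ (n.factorization p) := by
    intro p hp
    have hp2 : 2 ≤ p := (Nat.prime_of_mem_primeFactors hp).two_le
    split_ifs with h
    · refine (hK _).trans ?_
      have : (2 : ℝ) ≤ p := by exact_mod_cast hp2
      gcongr
    · rw [one_mul]
      push Not at h
      have h1 : ((n.factorization p : ℝ) + 1) ≤ 2 ^ (n.factorization p) := by
        exact_mod_cast Nat.lt_two_pow_self
      calc ((n.factorization p : ℝ) + 1) ^ 12 ≤ (2 ^ (n.factorization p)) ^ 12 := by gcongr
        _ = (4096 : ℝ) ^ (n.factorization p) := by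
          rw [← pow_mul, mul_comm, pow_mul]; norm_num
        _ ≤ _ := by
          have : (4096 : ℝ) ≤ p := by exact_mod_cast h
          gcongr
  push_cast
  rw [← Finset.prod_pow]
  calc _ ≤ ∏ p ∈ n.primeFactors, (if p < 4096 then K else 1) * (p : ℝ) ^ (n.factorization p) :=
        Finset.prod_le_prod (fun i _ => by positivity) step
    _ = (∏ p ∈ n.primeFactors, (if p < 4096 then K else 1)) * n := by
        rw [Finset.prod_mul_distrib, ← hfac]
    _ ≤ _ := by
        gcongr
        rw [Finset.prod_ite]
        simp only [Finset.prod_const, one_pow, mul_one]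
        refine pow_le_pow_right₀ hK1 ?_
        calc _ ≤ (Finset.range 4096).card := by
              apply Finset.card_le_card
              intro x hx
              simp at hx ⊢
              exact hx.2
          _ = 4096 := by simp

lemma le_card_divisors_mul_totient (n : ℕ) : n ≤ n.divisors.card * n.totient := by
  rcases Nat.eq_zero_or_pos n with rfl | hn
  · simp
  calc n = ∑ d ∈ n.divisors, d.totient := (Nat.sum_totient n).symm
    _ ≤ ∑ d ∈ n.divisors, n.totient := by
        apply Finset.sum_le_sum
        intro d hd
        exact Nat.le_of_dvd (Nat.totient_pos.2 hn) (Nat.totient_dvd_of_dvd (Nat.dvd_of_mem_divisors hd))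
    _ = _ := by simp

/-- Kloosterman sums -/
noncomputable def kl (q : ℕ) [NeZero q] (m k : ZMod q) : ℂ :=
  ∑ x : (ZMod q)ˣ, ZMod.stdAddChar (m * (x : ZMod q) + k * ((x⁻¹ : (ZMod q)ˣ) : ZMod q))

lemma kl_scale (q : ℕ) [NeZero q] (m k : ZMod q) (t : (ZMod q)ˣ) :
    kl q (m * t) (k * ((t⁻¹ : (ZMod q)ˣ) : ZMod q)) = kl q m k := by
  unfold kl
  refine Fintype.sum_equiv (Equiv.mulLeft t) _ _ ?_
  intro x
  congr 1
  simp only [Equiv.coe_mulLeft, mul_inv_rev, Units.val_mul]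
  ring

lemma star_stdAddChar (q : ℕ) [NeZero q] (a : ZMod q) :
    (starRingEnd ℂ) (ZMod.stdAddChar a) = ZMod.stdAddChar (-a) := by
  rw [AddChar.map_neg_eq_conj]

lemma norm_stdAddChar (q : ℕ) [NeZero q] (a : ZMod q) :
    ‖(ZMod.stdAddChar a : ℂ)‖ = 1 := by
  rw [ZMod.stdAddChar_apply]; exact Circle.norm_coe _

abbrev Quad (q : ℕ) := ((ZMod q)ˣ × (ZMod q)ˣ) × ((ZMod q)ˣ × (ZMod q)ˣ)

def quadA (q : ℕ) (x : Quad q) : ZMod q :=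
  (x.1.1 : ZMod q) + x.1.2 - x.2.1 - x.2.2
def quadB (q : ℕ) (x : Quad q) : ZMod q :=
  ((x.1.1⁻¹ : (ZMod q)ˣ) : ZMod q) + ((x.1.2⁻¹ : (ZMod q)ˣ) : ZMod q)
    - ((x.2.1⁻¹ : (ZMod q)ˣ) : ZMod q) - ((x.2.2⁻¹ : (ZMod q)ˣ) : ZMod q)

lemma kl_fourth (q : ℕ) [NeZero q] (m k : ZMod q) :
    ((‖kl q m k‖ ^ 4 : ℝ) : ℂ) =
      ∑ x : Quad q, ZMod.stdAddChar (m * quadA q x) * ZMod.stdAddChar (k * quadB q x) := by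
  have h1 : ((‖kl q m k‖ ^ 4 : ℝ) : ℂ) =
      (kl q m k * kl q m k) * ((starRingEnd ℂ) (kl q m k) * (starRingEnd ℂ) (kl q m k)) := by
    have := Complex.mul_conj' (kl q m k)
    push_cast
    linear_combination (-(‖kl q m k‖:ℂ)^2 - kl q m k * (starRingEnd ℂ) (kl q m k)) * this
  rw [h1]
  simp only [kl, map_sum, star_stdAddChar]
  rw [Fintype.sum_mul_sum, Fintype.sum_mul_sum, ← Fintype.sum_prod_type',
    ← Fintype.sum_prod_type', Fintype.sum_mul_sum, ← Fintype.sum_prod_type']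
  apply Finset.sum_congr rfl
  rintro ⟨⟨a, b⟩, ⟨c, d⟩⟩ -
  simp only [quadA, quadB, ← AddChar.map_add_eq_mul]
  congr 1
  ring

lemma kl_moment (q : ℕ) [NeZero q] :
    ∑ m : ZMod q, ∑ k : ZMod q, ‖kl q m k‖ ^ 4 =
      (q : ℝ) ^ 2 * ((Finset.univ.filter
        (fun x : Quad q => quadA q x = 0 ∧ quadB q x = 0)).card : ℝ) := by
  apply Complex.ofReal_injective
  rw [Complex.ofReal_sum]
  simp_rw [Complex.ofReal_sum, kl_fourth]
  have : ∀ m : ZMod q, ∑ k : ZMod q, ∑ x : Quad q,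
      (ZMod.stdAddChar (m * quadA q x) * ZMod.stdAddChar (k * quadB q x) : ℂ) =
      ∑ x : Quad q, ZMod.stdAddChar (m * quadA q x) *
        (if quadB q x = 0 then (q : ℂ) else 0) := by
    intro m
    rw [Finset.sum_comm]
    apply Finset.sum_congr rfl
    intro x _
    rw [← Finset.mul_sum, AddChar.sum_mulShift _ (ZMod.isPrimitive_stdAddChar q), ZMod.card]
    push_cast; rfl
  simp_rw [this]
  rw [Finset.sum_comm]
  simp_rw [← Finset.sum_mul, AddChar.sum_mulShift _ (ZMod.isPrimitive_stdAddChar q), ZMod.card]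
  rw [Finset.card_filter]
  push_cast
  rw [Finset.mul_sum]
  apply Finset.sum_congr rfl
  intro x _
  by_cases h1 : quadA q x = 0 <;> by_cases h2 : quadB q x = 0 <;> simp [h1, h2, sq]

def bigGcd (q : ℕ) [NeZero q] : Finset (ZMod q) :=
  Finset.univ.filter (fun u => q ≤ (Nat.gcd q u.val) ^ 3)

lemma bigGcd_of_mul (q : ℕ) [NeZero q] (a b c : ZMod q) (h : a * b * c = 0) :
    a ∈ bigGcd q ∨ b ∈ bigGcd q ∨ c ∈ bigGcd q := by
  by_contra hcon
  simp only [bigGcd, Finset.mem_filter, Finset.mem_univ, true_and, not_or, not_le] at hcon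
  obtain ⟨ha, hb, hc⟩ := hcon
  have hdvd : q ∣ a.val * b.val * c.val := by
    rw [← ZMod.natCast_eq_zero_iff]
    push_cast
    simpa using h
  have h1 : q ∣ Nat.gcd q a.val * Nat.gcd q b.val * Nat.gcd q c.val := by
    have e : Nat.gcd q (a.val * b.val * c.val) = q := Nat.gcd_eq_left hdvd
    calc q = Nat.gcd q (a.val * b.val * c.val) := e.symm
      _ ∣ Nat.gcd q (a.val * b.val) * Nat.gcd q c.val := Nat.gcd_mul_right_dvd_mul_gcd ..
      _ ∣ _ := Nat.mul_dvd_mul_right (Nat.gcd_mul_right_dvd_mul_gcd ..) _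
  have q0 : 0 < q := Nat.pos_of_ne_zero (NeZero.ne q)
  have ga := Nat.gcd_pos_of_pos_left a.val q0
  have gb := Nat.gcd_pos_of_pos_left b.val q0
  have gc := Nat.gcd_pos_of_pos_left c.val q0
  have h2 := Nat.le_of_dvd (by positivity) h1
  have h3 : q ^ 3 ≤ (Nat.gcd q a.val * Nat.gcd q b.val * Nat.gcd q c.val) ^ 3 :=
    Nat.pow_le_pow_left h2 3
  have h4 : (Nat.gcd q a.val * Nat.gcd q b.val * Nat.gcd q c.val) ^ 3 < q ^ 3 := by
    rw [mul_pow, mul_pow]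
    calc _ < q * q * q := by gcongr
      _ = q ^ 3 := by ring
  omega

lemma quad_rel (q : ℕ) [NeZero q] (x : Quad q) (hA : quadA q x = 0) (hB : quadB q x = 0) :
    ((x.1.1 : ZMod q) + x.1.2) * ((x.2.1 : ZMod q) - x.1.1) * ((x.2.1 : ZMod q) - x.1.2) = 0 := by
  obtain ⟨⟨a, b⟩, ⟨c, d⟩⟩ := x
  simp only [quadA, quadB] at *
  have ha : (a : ZMod q) * ((a⁻¹ : (ZMod q)ˣ) : ZMod q) = 1 := a.mul_inv
  have hb : (b : ZMod q) * ((b⁻¹ : (ZMod q)ˣ) : ZMod q) = 1 := b.mul_inv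
  have hc : (c : ZMod q) * ((c⁻¹ : (ZMod q)ˣ) : ZMod q) = 1 := c.mul_inv
  have hd : (d : ZMod q) * ((d⁻¹ : (ZMod q)ˣ) : ZMod q) = 1 := d.mul_inv
  generalize ((a⁻¹ : (ZMod q)ˣ) : ZMod q) = a' at *
  generalize ((b⁻¹ : (ZMod q)ˣ) : ZMod q) = b' at *
  generalize ((c⁻¹ : (ZMod q)ˣ) : ZMod q) = c' at *
  generalize ((d⁻¹ : (ZMod q)ˣ) : ZMod q) = d' at *
  generalize (a : ZMod q) = A at *
  generalize (b : ZMod q) = B at *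
  generalize (c : ZMod q) = C at *
  generalize (d : ZMod q) = D at *
  have hD : D = A + B - C := by linear_combination -hA
  -- (A+B) C D = (C+D) A B
  have h1 : (A + B) * (C * D) = (C + D) * (A * B) := by
    have e : A * B * C * D * (a' + b' - c' - d') = 0 := by rw [hB]; ring
    linear_combination e - B * C * D * ha - A * C * D * hb + A * B * D * hc + A * B * C * hd
  rw [hD] at h1
  linear_combination -h1

lemma quad_card (q : ℕ) [NeZero q] :
    (Finset.univ.filter (fun x : Quad q => quadA q x = 0 ∧ quadB q x = 0)).card
      ≤ 3 * ((bigGcd q).card * (q * q)) := by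
  set S := Finset.univ.filter (fun x : Quad q => quadA q x = 0 ∧ quadB q x = 0) with hS
  set E1 := S.filter (fun x => ((x.1.1 : ZMod q) + x.1.2) ∈ bigGcd q)
  set E2 := S.filter (fun x => ((x.2.1 : ZMod q) - x.1.1) ∈ bigGcd q)
  set E3 := S.filter (fun x => ((x.2.1 : ZMod q) - x.1.2) ∈ bigGcd q)
  have hsub : S ⊆ E1 ∪ (E2 ∪ E3) := by
    intro x hx
    have hx' := hx
    simp only [hS, Finset.mem_filter, Finset.mem_univ, true_and] at hx'
    have := bigGcd_of_mul q _ _ _ (quad_rel q x hx'.1 hx'.2)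
    simp only [Finset.mem_union, E1, E2, E3, Finset.mem_filter, hx, true_and]
    exact this
  have hcard : ((bigGcd q) ×ˢ (Finset.univ : Finset (ZMod q × ZMod q))).card =
      (bigGcd q).card * (q * q) := by
    rw [Finset.card_product]; simp [ZMod.card]
  have inj : ∀ x y : Quad q, x ∈ S → y ∈ S → (x.1.1 : ZMod q) = y.1.1 →
      (x.1.2 : ZMod q) = y.1.2 → (x.2.1 : ZMod q) = y.2.1 → x = y := by
    rintro ⟨⟨a, b⟩, ⟨c, d⟩⟩ ⟨⟨a', b'⟩, ⟨c', d'⟩⟩ hx hy h1 h2 h3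
    simp only [hS, Finset.mem_filter, Finset.mem_univ, true_and] at hx hy
    simp only [quadA] at hx hy
    simp only at h1 h2 h3
    have h4 : (d : ZMod q) = d' := by
      linear_combination hy.1 - hx.1 + h1 + h2 - h3
    simp only [Prod.mk.injEq]
    exact ⟨⟨Units.ext h1, Units.ext h2⟩, Units.ext h3, Units.ext h4⟩
  have c1 : E1.card ≤ (bigGcd q).card * (q * q) := by
    rw [← hcard]
    apply Finset.card_le_card_of_injOn (fun x => ((x.1.1 : ZMod q) + x.1.2, (x.1.1 : ZMod q), (x.2.1 : ZMod q)))
    · intro x hx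
      simp only [E1, Finset.coe_filter, Set.mem_ofPred_eq] at hx
      simp [hx.2]
    · intro x hx y hy hxy
      simp only [E1, Finset.coe_filter, Set.mem_ofPred_eq] at hx hy
      simp only [Prod.mk.injEq] at hxy
      exact inj x y hx.1 hy.1 hxy.2.1 (by linear_combination hxy.1 - hxy.2.1) hxy.2.2
  have c2 : E2.card ≤ (bigGcd q).card * (q * q) := by
    rw [← hcard]
    apply Finset.card_le_card_of_injOn (fun x => ((x.2.1 : ZMod q) - x.1.1, (x.1.1 : ZMod q), (x.1.2 : ZMod q)))
    · intro x hx
      simp only [E2, Finset.coe_filter, Set.mem_ofPred_eq] at hx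
      simp [hx.2]
    · intro x hx y hy hxy
      simp only [E2, Finset.coe_filter, Set.mem_ofPred_eq] at hx hy
      simp only [Prod.mk.injEq] at hxy
      exact inj x y hx.1 hy.1 hxy.2.1 hxy.2.2 (by linear_combination hxy.1 + hxy.2.1)
  have c3 : E3.card ≤ (bigGcd q).card * (q * q) := by
    rw [← hcard]
    apply Finset.card_le_card_of_injOn (fun x => ((x.2.1 : ZMod q) - x.1.2, (x.1.1 : ZMod q), (x.1.2 : ZMod q)))
    · intro x hx
      simp only [E3, Finset.coe_filter, Set.mem_ofPred_eq] at hx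
      simp [hx.2]
    · intro x hx y hy hxy
      simp only [E3, Finset.coe_filter, Set.mem_ofPred_eq] at hx hy
      simp only [Prod.mk.injEq] at hxy
      exact inj x y hx.1 hy.1 hxy.2.1 hxy.2.2 (by linear_combination hxy.1 + hxy.2.2)
  have := Finset.card_le_card hsub
  have u1 := Finset.card_union_le E1 (E2 ∪ E3)
  have u2 := Finset.card_union_le E2 E3
  omega

lemma bigGcd_card (q : ℕ) [NeZero q] :
    ((bigGcd q).card : ℝ) ≤ q.divisors.card * (q : ℝ) ^ ((2 : ℝ) / 3) := by
  have q0 : 0 < q := Nat.pos_of_ne_zero (NeZero.ne q)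
  have hsub : (bigGcd q).card ≤ ∑ d ∈ q.divisors.filter (fun d => q ≤ d ^ 3),
      ((Finset.range q).filter (fun k => q.gcd k = d)).card := by
    rw [← Finset.card_sigma]
    apply Finset.card_le_card_of_injOn (fun u => ⟨q.gcd u.val, u.val⟩)
    · intro u hu
      simp only [bigGcd, Finset.coe_filter, Finset.mem_univ, true_and, Set.mem_ofPred_eq] at hu
      simp [hu, Nat.gcd_dvd_left, q0.ne', ZMod.val_lt]
    · intro u _ v _ huv
      simp only [Sigma.mk.injEq] at huv
      apply ZMod.val_injective q
      exact eq_of_heq huv.2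
  have h2 : ((bigGcd q).card : ℝ) ≤ ∑ d ∈ q.divisors.filter (fun d => q ≤ d ^ 3),
      (q : ℝ) ^ ((2 : ℝ) / 3) := by
    refine (Nat.cast_le.2 hsub).trans ?_
    push_cast
    apply Finset.sum_le_sum
    intro d hd
    simp only [Finset.mem_filter, Nat.mem_divisors] at hd
    obtain ⟨⟨hdq, -⟩, hd3⟩ := hd
    rw [← Nat.totient_div_of_dvd hdq]
    refine (Nat.cast_le.2 (Nat.totient_le _)).trans ?_
    obtain ⟨e, he⟩ := hdq
    have d0 : 0 < d := by
      rcases Nat.eq_zero_or_pos d with rfl | h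
      · simp at he; omega
      · exact h
    have hqd : q / d = e := by rw [he]; exact Nat.mul_div_cancel_left e d0
    rw [hqd]
    have : e ^ 3 ≤ q ^ 2 := by
      have : q * e ^ 3 ≤ q * q ^ 2 := by
        calc q * e ^ 3 ≤ d ^ 3 * e ^ 3 := by gcongr
          _ = q * q ^ 2 := by rw [he]; ring
      exact Nat.le_of_mul_le_mul_left this q0
    have h3 : ((e : ℝ) ^ (3 : ℕ)) ≤ (q : ℝ) ^ (2 : ℕ) := by exact_mod_cast this
    calc (e : ℝ) = ((e : ℝ) ^ (3 : ℕ)) ^ ((1 : ℝ) / 3) := by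
          rw [← Real.rpow_natCast, ← Real.rpow_mul (by positivity)]; norm_num
      _ ≤ ((q : ℝ) ^ (2 : ℕ)) ^ ((1 : ℝ) / 3) := by gcongr
      _ = _ := by rw [← Real.rpow_natCast, ← Real.rpow_mul (by positivity)]; norm_num
  refine h2.trans ?_
  rw [Finset.sum_const, nsmul_eq_mul]
  gcongr
  exact Finset.filter_subset _ _

lemma fiber_card_nat (q : ℕ) [NeZero q] (n : ℕ) (hn : 0 < n) (c : ZMod q) :
    (Finset.univ.filter (fun y : ZMod q => (n : ZMod q) * y = c)).card ≤ n := by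
  have q0 : 0 < q := Nat.pos_of_ne_zero (NeZero.ne q)
  conv_rhs => rw [← Finset.card_range n]
  apply Finset.card_le_card_of_injOn (fun y => (n * y.val) / q)
  · intro y _
    simp only [Finset.coe_range, Set.mem_Iio]
    rw [Nat.div_lt_iff_lt_mul q0]
    exact Nat.mul_lt_mul_of_pos_left (ZMod.val_lt y) hn
  · intro y hy z hz hyz
    simp only [Finset.coe_filter, Finset.mem_univ, true_and, Set.mem_ofPred_eq] at hy hz
    simp only at hyz
    have key : ∀ w : ZMod q, (n : ZMod q) * w = c → (n * w.val) % q = c.val := by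
      intro w hw
      rw [← ZMod.val_natCast]
      push_cast
      rw [ZMod.natCast_zmod_val, hw]
    have e : n * y.val = n * z.val := by
      rw [← Nat.div_add_mod (n * y.val) q, ← Nat.div_add_mod (n * z.val) q, hyz, key y hy, key z hz]
    exact ZMod.val_injective q (Nat.eq_of_mul_eq_mul_left hn e)

lemma fiber_card_int (q : ℕ) [NeZero q] (k : ℤ) (hk : k ≠ 0) (c : ZMod q) :
    (Finset.univ.filter (fun y : ZMod q => (k : ZMod q) * y = c)).card ≤ k.natAbs := by
  rcases Int.natAbs_eq k with h | h
  · have := fiber_card_nat q k.natAbs (Int.natAbs_pos.2 hk) c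
    refine le_trans (le_of_eq ?_) this
    congr 2
    ext y
    conv_lhs => rw [h]
    simp only [Int.cast_natCast]
  · have := fiber_card_nat q k.natAbs (Int.natAbs_pos.2 hk) (-c)
    refine le_trans (le_of_eq ?_) this
    congr 2
    ext y
    conv_lhs => rw [h]
    simp only [Int.cast_neg, Int.cast_natCast, neg_mul]
    rw [neg_eq_iff_eq_neg]

lemma kl_pow_bound (q : ℕ) [NeZero q] (k : ℤ) (hk : k ≠ 0) (m : ZMod q) :
    (q.totient : ℝ) * ‖kl q m k‖ ^ 4 ≤
      (k.natAbs : ℝ) * ((q : ℝ) ^ 2 * (3 * ((bigGcd q).card * (q * q)))) := by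
  have h1 : (q.totient : ℝ) * ‖kl q m k‖ ^ 4 =
      ∑ t : (ZMod q)ˣ, ‖kl q (m * t) (k * ((t⁻¹ : (ZMod q)ˣ) : ZMod q))‖ ^ 4 := by
    simp_rw [kl_scale]
    rw [Finset.sum_const, nsmul_eq_mul, Finset.card_univ, ZMod.card_units_eq_totient]
  set F : ZMod q → ℝ := fun k' => ∑ m' : ZMod q, ‖kl q m' k'‖ ^ 4 with hF
  have hF0 : ∀ k', 0 ≤ F k' := fun k' => Finset.sum_nonneg (fun _ _ => by positivity)
  have h2 : ∑ t : (ZMod q)ˣ, ‖kl q (m * t) (k * ((t⁻¹ : (ZMod q)ˣ) : ZMod q))‖ ^ 4 ≤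
      ∑ t : (ZMod q)ˣ, F (k * ((t⁻¹ : (ZMod q)ˣ) : ZMod q)) := by
    apply Finset.sum_le_sum
    intro t _
    exact Finset.single_le_sum (f := fun m' => ‖kl q m' (k * ((t⁻¹ : (ZMod q)ˣ) : ZMod q))‖ ^ 4)
      (fun _ _ => by positivity) (Finset.mem_univ _)
  have h3 : ∑ t : (ZMod q)ˣ, F (k * ((t⁻¹ : (ZMod q)ˣ) : ZMod q)) ≤ ∑ y : ZMod q, F (k * y) := by
    have e : ∑ t : (ZMod q)ˣ, F (k * ((t⁻¹ : (ZMod q)ˣ) : ZMod q)) =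
        ∑ y ∈ Finset.univ.image (fun t : (ZMod q)ˣ => ((t⁻¹ : (ZMod q)ˣ) : ZMod q)), F (k * y) := by
      rw [Finset.sum_image]
      intro a _ b _ hab
      exact inv_injective (Units.ext hab)
    rw [e]
    exact Finset.sum_le_sum_of_subset_of_nonneg (Finset.subset_univ _) (fun _ _ _ => hF0 _)
  have h4 : ∑ y : ZMod q, F (k * y) ≤ (k.natAbs : ℝ) * ∑ k' : ZMod q, F k' := by
    rw [← Finset.sum_fiberwise (s := Finset.univ) (g := fun y : ZMod q => (k : ZMod q) * y),
      Finset.mul_sum]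
    apply Finset.sum_le_sum
    intro c _
    have : ∑ y ∈ Finset.univ.filter (fun y : ZMod q => (k : ZMod q) * y = c), F (k * y) =
        ∑ y ∈ Finset.univ.filter (fun y : ZMod q => (k : ZMod q) * y = c), F c := by
      apply Finset.sum_congr rfl
      intro y hy
      rw [(Finset.mem_filter.1 hy).2]
    rw [this, Finset.sum_const, nsmul_eq_mul]
    have := hF0 c
    gcongr
    exact fiber_card_int q k hk c
  have h5 : ∑ k' : ZMod q, F k' ≤ (q : ℝ) ^ 2 * (3 * ((bigGcd q).card * (q * q))) := by
    rw [hF, Finset.sum_comm, kl_moment]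
    gcongr
    exact_mod_cast quad_card q
  rw [h1]
  refine h2.trans (h3.trans (h4.trans ?_))
  gcongr

lemma kl_bound (k : ℤ) (hk : k ≠ 0) : ∃ C : ℝ, 0 < C ∧ ∀ (q : ℕ) [NeZero q] (m : ZMod q),
    ‖kl q m k‖ ≤ C * (q : ℝ) ^ ((23 : ℝ) / 24) := by
  obtain ⟨C, hC, hd⟩ := divisor_bound
  have hk0 : (0 : ℝ) < k.natAbs := by exact_mod_cast Int.natAbs_pos.2 hk
  set M : ℝ := 3 * k.natAbs * (C ^ ((1 : ℝ) / 12)) ^ 2 with hM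
  have hM0 : 0 < M := by positivity
  refine ⟨M ^ ((1 : ℝ) / 4), by positivity, ?_⟩
  intro q _ m
  have q0 : 0 < q := Nat.pos_of_ne_zero (NeZero.ne q)
  have q0' : (0 : ℝ) < q := by exact_mod_cast q0
  have h1 := kl_pow_bound q k hk m
  have h2 := bigGcd_card q
  have h3 : (q : ℝ) ≤ q.divisors.card * q.totient := by
    exact_mod_cast le_card_divisors_mul_totient q
  have h4 : (q.divisors.card : ℝ) ≤ C ^ ((1 : ℝ) / 12) * (q : ℝ) ^ ((1 : ℝ) / 12) := by
    rw [← Real.mul_rpow hC.le q0'.le]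
    calc (q.divisors.card : ℝ) = ((q.divisors.card : ℝ) ^ (12 : ℕ)) ^ ((1 : ℝ) / 12) := by
          rw [← Real.rpow_natCast, ← Real.rpow_mul (by positivity)]; norm_num
      _ ≤ _ := by
        have := hd q q0.ne'
        gcongr
  set d : ℝ := (q.divisors.card : ℝ)
  have hd0 : 0 ≤ d := by positivity
  set X := ‖kl q m k‖ with hX
  have hX0 : 0 ≤ X := norm_nonneg _
  have h5 : (q : ℝ) * X ^ 4 ≤ q * (M * ((q : ℝ) ^ ((23 : ℝ) / 6))) := by
    calc (q : ℝ) * X ^ 4 ≤ (d * q.totient) * X ^ 4 := by gcongr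
      _ = d * (q.totient * X ^ 4) := by ring
      _ ≤ d * ((k.natAbs : ℝ) * ((q : ℝ) ^ 2 * (3 * ((d * (q : ℝ) ^ ((2 : ℝ) / 3)) * (q * q))))) := by
          refine mul_le_mul_of_nonneg_left (h1.trans ?_) hd0
          gcongr
      _ = d ^ 2 * ((k.natAbs : ℝ) * 3 * ((q : ℝ) ^ 4 * (q : ℝ) ^ ((2 : ℝ) / 3))) := by ring
      _ ≤ (C ^ ((1 : ℝ) / 12) * (q : ℝ) ^ ((1 : ℝ) / 12)) ^ 2 *
            ((k.natAbs : ℝ) * 3 * ((q : ℝ) ^ 4 * (q : ℝ) ^ ((2 : ℝ) / 3))) := by gcongr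
      _ = q * (M * ((q : ℝ) ^ ((23 : ℝ) / 6))) := by
          have e1 : (((q : ℝ) ^ ((1 : ℝ) / 12)) ^ 2) * ((q : ℝ) ^ 4 * (q : ℝ) ^ ((2 : ℝ) / 3)) =
              q * (q : ℝ) ^ ((23 : ℝ) / 6) := by
            rw [← Real.rpow_natCast, ← Real.rpow_natCast, ← Real.rpow_mul q0'.le,
              ← Real.rpow_add q0', ← Real.rpow_add q0']
            conv_rhs => rw [← Real.rpow_one_add' q0'.le (by norm_num)]
            norm_num
          rw [mul_pow, hM]
          linear_combination (C ^ ((1 : ℝ) / 12)) ^ 2 * (k.natAbs : ℝ) * 3 * e1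
  have h6 : X ^ 4 ≤ M * ((q : ℝ) ^ ((23 : ℝ) / 6)) := le_of_mul_le_mul_left h5 q0'
  calc X = (X ^ (4 : ℕ)) ^ ((1 : ℝ) / 4) := by
        rw [← Real.rpow_natCast, ← Real.rpow_mul (by positivity)]; norm_num
    _ ≤ (M * ((q : ℝ) ^ ((23 : ℝ) / 6))) ^ ((1 : ℝ) / 4) := by gcongr
    _ = _ := by
      rw [Real.mul_rpow hM0.le (by positivity), ← Real.rpow_mul q0'.le]; norm_num

open Classical in
/-- the summand of a Kloosterman sum, extended by zero -/
noncomputable def klg (q : ℕ) [NeZero q] (k a : ZMod q) : ℂ :=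
  if IsUnit a then ZMod.stdAddChar (k * a⁻¹) else 0

lemma sum_klg (q : ℕ) [NeZero q] (m k : ZMod q) :
    ∑ a : ZMod q, klg q k a * ZMod.stdAddChar (m * a) = kl q m k := by
  classical
  unfold kl klg
  simp only [ite_mul, zero_mul]
  rw [← Finset.sum_filter]
  symm
  refine Finset.sum_bij (fun x _ => (x : ZMod q)) ?_ ?_ ?_ ?_
  · intro x _; simp
  · intro x _ y _ h; exact Units.ext h
  · intro b hb
    obtain ⟨u, hu⟩ := (Finset.mem_filter.1 hb).2
    exact ⟨u, Finset.mem_univ _, hu⟩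
  · intro x _
    rw [← AddChar.map_add_eq_mul, ZMod.inv_coe_unit, add_comm]

lemma klg_inversion (q : ℕ) [NeZero q] (k y : ZMod q) :
    (q : ℂ) * klg q k y = ∑ m : ZMod q, kl q m k * ZMod.stdAddChar (m * (-y)) := by
  simp_rw [← sum_klg, Finset.sum_mul]
  rw [Finset.sum_comm]
  have : ∀ a : ZMod q, ∑ m : ZMod q, klg q k a * ZMod.stdAddChar (m * a) *
      ZMod.stdAddChar (m * (-y)) = klg q k a * (if a - y = 0 then (q : ℂ) else 0) := by
    intro a
    have e := AddChar.sum_mulShift (a - y) (ZMod.isPrimitive_stdAddChar q)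
    rw [ZMod.card] at e
    push_cast at e
    rw [← e, Finset.mul_sum]
    apply Finset.sum_congr rfl
    intro m _
    rw [mul_assoc, ← AddChar.map_add_eq_mul]
    congr 2; ring
  simp_rw [this, sub_eq_zero]
  simp [mul_comm]

lemma sin_lower (t : ℝ) (h0 : 0 ≤ t) (h1 : t ≤ 1) : 2 * (t * (1 - t)) ≤ Real.sin (Real.pi * t) := by
  have hpi := Real.pi_pos
  rcases le_total t (1 / 2) with h | h
  · have := Real.mul_le_sin (x := Real.pi * t) (by positivity) (by nlinarith)
    have e : 2 / Real.pi * (Real.pi * t) = 2 * t := by field_simp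
    rw [e] at this
    nlinarith
  · have := Real.mul_le_sin (x := Real.pi * (1 - t)) (by nlinarith) (by nlinarith)
    have e : 2 / Real.pi * (Real.pi * (1 - t)) = 2 * (1 - t) := by field_simp
    have e2 : Real.sin (Real.pi * (1 - t)) = Real.sin (Real.pi * t) := by
      rw [← Real.sin_pi_sub]; congr 1; ring
    rw [e, e2] at this
    nlinarith

lemma norm_geom_stdAddChar (q : ℕ) [NeZero q] (m : ZMod q) (hm : m ≠ 0) (M n : ℕ) :
    ‖∑ i ∈ Finset.range n, (ZMod.stdAddChar (m * (-((M + i : ℕ) : ZMod q))) : ℂ)‖ ≤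
      (q : ℝ) / 2 * (1 / (m.val : ℝ) + 1 / ((q : ℝ) - m.val)) := by
  have q0 : (0 : ℝ) < q := by exact_mod_cast Nat.pos_of_ne_zero (NeZero.ne q)
  have hv0 : (0 : ℝ) < m.val := by
    exact_mod_cast Nat.pos_of_ne_zero (fun h => hm ((ZMod.val_eq_zero m).1 h))
  have hvq : (m.val : ℝ) < q := by exact_mod_cast ZMod.val_lt m
  set z : ℂ := ZMod.stdAddChar (-m) with hz
  have hz' : ‖z - 1‖ = 2 * Real.sin (Real.pi * (m.val / q)) := by
    have e1 : z = (starRingEnd ℂ) (ZMod.stdAddChar m) := by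
      rw [star_stdAddChar]
    have e2 : ‖z - 1‖ = ‖(ZMod.stdAddChar m : ℂ) - 1‖ := by
      rw [e1, ← Complex.norm_conj]; simp
    have e3 : (ZMod.stdAddChar m : ℂ) = Complex.exp (Complex.I * ((2 * Real.pi * (m.val / q) : ℝ) : ℂ)) := by
      have := ZMod.stdAddChar_coe (N := q) (m.val : ℤ)
      have hcast : (((m.val : ℕ) : ℤ) : ZMod q) = m := by simp
      rw [hcast] at this
      rw [this]
      congr 1
      push_cast
      ring
    rw [e2, e3, Complex.norm_exp_I_mul_ofReal_sub_one]
    rw [show 2 * Real.pi * ((m.val : ℝ) / q) / 2 = Real.pi * (m.val / q) by ring]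
    have := sin_lower (m.val / q) (by positivity) (by rw [div_le_one q0]; exact hvq.le)
    have h3 : 0 ≤ (m.val : ℝ) / q * (1 - m.val / q) := by
      apply mul_nonneg (by positivity)
      rw [sub_nonneg, div_le_one q0]; exact hvq.le
    rw [Real.norm_eq_abs, abs_of_nonneg (by linarith)]
  have hlow := sin_lower (m.val / q) (by positivity) (by rw [div_le_one q0]; exact hvq.le)
  have hpos : 0 < (m.val : ℝ) / q * (1 - m.val / q) := by
    apply mul_pos (by positivity)
    rw [sub_pos, div_lt_one q0]; exact hvq
  have hz1 : z ≠ 1 := by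
    intro h
    rw [h, sub_self, norm_zero] at hz'
    linarith
  have hterm : ∀ i ∈ Finset.range n, (ZMod.stdAddChar (m * (-((M + i : ℕ) : ZMod q))) : ℂ) =
      ZMod.stdAddChar (m * (-(M : ZMod q))) * z ^ i := by
    intro i _
    rw [hz, ← AddChar.map_nsmul_eq_pow, ← AddChar.map_add_eq_mul]
    congr 1
    push_cast
    simp only [nsmul_eq_mul]
    ring
  rw [Finset.sum_congr rfl hterm, ← Finset.mul_sum, norm_mul, norm_stdAddChar, one_mul,
    geom_sum_eq hz1, norm_div, hz']
  have hnum : ‖z ^ n - 1‖ ≤ 2 := by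
    calc ‖z ^ n - 1‖ ≤ ‖z ^ n‖ + ‖(1 : ℂ)‖ := norm_sub_le _ _
      _ = 2 := by rw [norm_pow, hz, norm_stdAddChar]; norm_num
  calc ‖z ^ n - 1‖ / (2 * Real.sin (Real.pi * (m.val / q)))
      ≤ 2 / (2 * (2 * ((m.val : ℝ) / q * (1 - m.val / q)))) := by gcongr
    _ = _ := by
      have : (q : ℝ) - m.val ≠ 0 := by linarith
      field_simp
      ring

lemma sum_zmod_val (q : ℕ) [NeZero q] (f : ℕ → ℝ) :
    ∑ m : ZMod q, f m.val = ∑ j ∈ Finset.range q, f j := by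
  refine Finset.sum_bij (fun m _ => m.val) ?_ ?_ ?_ ?_
  · intro m _; simpa using ZMod.val_lt m
  · intro a _ b _ h; exact ZMod.val_injective q h
  · intro j hj
    exact ⟨(j : ZMod q), Finset.mem_univ _, ZMod.val_cast_of_lt (Finset.mem_range.1 hj)⟩
  · intro m _; rfl

lemma harm_bound (n : ℕ) : ∑ j ∈ Finset.Icc 1 n, 1 / (j : ℝ) ≤ 1 + Real.log n := by
  have := harmonic_le_one_add_log n
  rw [harmonic_eq_sum_Icc] at this
  push_cast at this
  simpa using this

lemma incomplete_bound (k : ℤ) (hk : k ≠ 0) : ∃ C : ℝ, 0 < C ∧ ∀ (q : ℕ) [NeZero q] (M n : ℕ), n ≤ q →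
    ‖∑ i ∈ Finset.range n, klg q k ((M + i : ℕ) : ZMod q)‖ ≤
      C * (q : ℝ) ^ ((23 : ℝ) / 24) * (2 + Real.log q) := by
  obtain ⟨C, hC, hkl⟩ := kl_bound k hk
  refine ⟨C, hC, ?_⟩
  intro q _ M n hn
  have q0 : (0 : ℝ) < q := by exact_mod_cast Nat.pos_of_ne_zero (NeZero.ne q)
  have q1 : 1 ≤ q := Nat.pos_of_ne_zero (NeZero.ne q)
  have e1 : (q : ℂ) * ∑ i ∈ Finset.range n, klg q k ((M + i : ℕ) : ZMod q) =
      ∑ m : ZMod q, kl q m k * ∑ i ∈ Finset.range n,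
        (ZMod.stdAddChar (m * (-((M + i : ℕ) : ZMod q))) : ℂ) := by
    rw [Finset.mul_sum]
    simp_rw [klg_inversion, Finset.mul_sum]
    rw [Finset.sum_comm]
  set f : ℕ → ℝ := fun j => if j = 0 then (q : ℝ) else
    (q : ℝ) / 2 * (1 / (j : ℝ) + 1 / ((q : ℝ) - j)) with hf
  have e2 : ∀ m : ZMod q, ‖∑ i ∈ Finset.range n,
        (ZMod.stdAddChar (m * (-((M + i : ℕ) : ZMod q))) : ℂ)‖ ≤ f m.val := by
    intro m
    by_cases hm : m = 0
    · subst hm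
      simp only [hf, ZMod.val_zero, if_true, zero_mul, AddChar.map_zero_eq_one]
      simp
      exact hn
    · have : m.val ≠ 0 := fun h => hm ((ZMod.val_eq_zero m).1 h)
      simp only [hf, this, if_false]
      exact norm_geom_stdAddChar q m hm M n
  have e3 : ∑ j ∈ Finset.range q, f j ≤ q * (2 + Real.log q) := by
    obtain ⟨r, rfl⟩ : ∃ r, q = r + 1 := ⟨q - 1, by omega⟩
    rw [Finset.sum_range_succ']
    have h1 : ∑ j ∈ Finset.range r, f (j + 1) =
        ((r + 1 : ℕ) : ℝ) / 2 * (∑ j ∈ Finset.range r, 1 / ((j : ℝ) + 1) +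
          ∑ j ∈ Finset.range r, 1 / (((r : ℝ) - 1 - j) + 1)) := by
      rw [← Finset.sum_add_distrib, Finset.mul_sum]
      apply Finset.sum_congr rfl
      intro j _
      simp only [hf, Nat.succ_ne_zero, if_false]
      push_cast
      congr 3
      ring
    have h2 : ∑ j ∈ Finset.range r, 1 / (((r : ℝ) - 1 - j) + 1) =
        ∑ j ∈ Finset.range r, 1 / ((j : ℝ) + 1) := by
      rw [← Finset.sum_range_reflect (fun j => 1 / ((j : ℝ) + 1)) r]
      apply Finset.sum_congr rfl
      intro j hj
      have : j < r := Finset.mem_range.1 hj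
      have : ((r - 1 - j : ℕ) : ℝ) = (r : ℝ) - 1 - j := by
        rw [Nat.cast_sub (by omega), Nat.cast_sub (by omega)]; simp
      rw [this]
    have h3 : ∑ j ∈ Finset.range r, 1 / ((j : ℝ) + 1) ≤ 1 + Real.log ((r + 1 : ℕ) : ℝ) := by
      refine le_trans ?_ (harm_bound (r + 1))
      have : ∑ j ∈ Finset.range r, 1 / ((j : ℝ) + 1) = ∑ j ∈ Finset.Icc 1 r, 1 / (j : ℝ) := by
        have := Finset.sum_Ico_add' (fun j : ℕ => 1 / (j : ℝ)) 0 r 1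
        push_cast at this
        rw [Finset.range_eq_Ico, this]
        apply Finset.sum_congr _ (fun _ _ => rfl)
        ext x
        simp only [Finset.mem_Ico, Finset.mem_Icc]
        omega
      rw [this]
      exact Finset.sum_le_sum_of_subset_of_nonneg (Finset.Icc_subset_Icc_right (by omega))
        (fun _ _ _ => by positivity)
    rw [h1, h2]
    simp only [hf, if_true]
    nlinarith
  have e4 : (q : ℝ) * ‖∑ i ∈ Finset.range n, klg q k ((M + i : ℕ) : ZMod q)‖ ≤
      q * (C * (q : ℝ) ^ ((23 : ℝ) / 24) * (2 + Real.log q)) := by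
    have : (q : ℝ) * ‖∑ i ∈ Finset.range n, klg q k ((M + i : ℕ) : ZMod q)‖ =
      ‖(q : ℂ) * ∑ i ∈ Finset.range n, klg q k ((M + i : ℕ) : ZMod q)‖ := by simp
    rw [this, e1]
    calc _ ≤ ∑ m : ZMod q, C * (q : ℝ) ^ ((23 : ℝ) / 24) * f m.val := by
          refine norm_sum_le_of_le _ ?_
          intro m _
          rw [norm_mul]
          gcongr
          · exact hkl q m
          · exact e2 m
      _ = C * (q : ℝ) ^ ((23 : ℝ) / 24) * ∑ j ∈ Finset.range q, f j := by
          rw [← Finset.mul_sum, sum_zmod_val]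
      _ ≤ C * (q : ℝ) ^ ((23 : ℝ) / 24) * (q * (2 + Real.log q)) := by gcongr
      _ = _ := by ring
  exact le_of_mul_le_mul_left e4 q0

lemma abel_bound (a : ℕ → ℂ) (w : ℕ → ℝ) (hw : Antitone w) (hw0 : ∀ i, 0 ≤ w i) (K : ℝ) (n : ℕ)
    (hK : ∀ j ≤ n, ‖∑ i ∈ Finset.range j, a i‖ ≤ K) :
    ‖∑ i ∈ Finset.range n, (w i : ℂ) * a i‖ ≤ K * w 0 := by
  have K0 : 0 ≤ K := (norm_nonneg _).trans (hK 0 (Nat.zero_le _))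
  rcases Nat.eq_zero_or_pos n with rfl | hn
  · simpa using mul_nonneg K0 (hw0 0)
  obtain ⟨r, rfl⟩ : ∃ r, n = r + 1 := ⟨n - 1, by omega⟩
  have key : ∀ r : ℕ, ∑ i ∈ Finset.range (r + 1), (w i : ℂ) * a i =
      (w r : ℂ) * ∑ i ∈ Finset.range (r + 1), a i +
      ∑ j ∈ Finset.range r, ((w j - w (j + 1) : ℝ) : ℂ) * ∑ i ∈ Finset.range (j + 1), a i := by
    intro r
    induction r with
    | zero => simp
    | succ r ih =>
      rw [Finset.sum_range_succ, ih, Finset.sum_range_succ (fun i => a i) (r + 1),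
        Finset.sum_range_succ (fun j => ((w j - w (j + 1) : ℝ) : ℂ) * _) r]
      push_cast
      ring
  rw [key]
  calc _ ≤ w r * K + ∑ j ∈ Finset.range r, (w j - w (j + 1)) * K := by
        refine (norm_add_le _ _).trans (add_le_add ?_ ?_)
        · rw [norm_mul, Complex.norm_real, Real.norm_of_nonneg (hw0 r)]
          exact mul_le_mul_of_nonneg_left (hK _ le_rfl) (hw0 r)
        · refine norm_sum_le_of_le _ ?_
          intro j hj
          have hj' := Finset.mem_range.1 hj
          have : 0 ≤ w j - w (j + 1) := sub_nonneg.2 (hw (Nat.le_succ j))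
          rw [norm_mul, Complex.norm_real, Real.norm_of_nonneg this]
          exact mul_le_mul_of_nonneg_left (hK _ (by omega)) this
    _ = K * w 0 := by
        rw [← Finset.sum_mul, Finset.sum_range_sub']; ring

/-- numerator of the left end point of the Farey gap with the given denominators -/
def farP (q q' : ℕ) : ℕ := (-(q' : ZMod q)⁻¹).val

lemma exp_farP (q q' : ℕ) [NeZero q] (hc : Nat.Coprime q q') (k : ℤ) :
    Complex.exp (2 * Real.pi * Complex.I * k * ((farP q q' : ℝ) / (q : ℝ) : ℝ)) =
      klg q ((-k : ℤ) : ZMod q) (q' : ZMod q) := by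
  have hu : IsUnit (q' : ZMod q) := (ZMod.isUnit_iff_coprime q' q).2 hc.symm
  simp only [klg, hu, if_true]
  have hcast : ((((k * (farP q q' : ℤ)) : ℤ)) : ZMod q) = ((-k : ℤ) : ZMod q) * (q' : ZMod q)⁻¹ := by
    push_cast
    rw [farP, ZMod.natCast_zmod_val]
    ring
  rw [← hcast, ZMod.stdAddChar_coe]
  congr 1
  push_cast
  ring

/-- the weight attached to a Farey gap -/
noncomputable def gapw (δ : ℝ) (q q' : ℕ) : ℝ := max 0 (1 / ((q : ℝ) * q') - δ)

def fareySet (N : ℕ) : Finset ((_ : ℕ) × ℕ) :=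
  (Finset.Icc 1 N).sigma (fun q => (Finset.Ioc (N - q) N).filter (fun q' => Nat.Coprime q q'))

lemma farey_exp_sum_bound (k : ℤ) (hk : k ≠ 0) : ∃ C : ℝ, 0 < C ∧ ∀ (N : ℕ) (δ : ℝ), 0 ≤ δ → 1 ≤ N →
    ‖∑ x ∈ fareySet N, (gapw δ x.1 x.2 : ℂ) *
      Complex.exp (2 * Real.pi * Complex.I * k * ((farP x.1 x.2 : ℝ) / (x.1 : ℝ) : ℝ))‖ ≤
      C * ((N : ℝ) ^ ((23 : ℝ) / 24) * (2 + Real.log N) * ((1 + Real.log N) / N)) := by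
  obtain ⟨C, hC, hinc⟩ := incomplete_bound (-k) (neg_ne_zero.2 hk)
  refine ⟨2 * C, by positivity, ?_⟩
  intro N δ hδ hN
  have N0 : (0 : ℝ) < N := by exact_mod_cast hN
  rw [fareySet, Finset.sum_sigma]
  have hq : ∀ q ∈ Finset.Icc 1 N, ‖∑ q' ∈ (Finset.Ioc (N - q) N).filter (fun q' => Nat.Coprime q q'),
      (gapw δ q q' : ℂ) *
      Complex.exp (2 * Real.pi * Complex.I * k * ((farP q q' : ℝ) / (q : ℝ) : ℝ))‖ ≤
      C * (N : ℝ) ^ ((23 : ℝ) / 24) * (2 + Real.log N) * (1 / N * (1 / (q : ℝ) + 1 / ((N : ℝ) + 1 - q))) := by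
    intro q hq
    rw [Finset.mem_Icc] at hq
    have : NeZero q := ⟨by omega⟩
    have q0 : (0 : ℝ) < q := by exact_mod_cast hq.1
    have qN : (q : ℝ) ≤ N := by exact_mod_cast hq.2
    have e1 : ∑ q' ∈ (Finset.Ioc (N - q) N).filter (fun q' => Nat.Coprime q q'),
      (gapw δ q q' : ℂ) *
      Complex.exp (2 * Real.pi * Complex.I * k * ((farP q q' : ℝ) / (q : ℝ) : ℝ)) =
      ∑ i ∈ Finset.range q, (gapw δ q (N + 1 - q + i) : ℂ) *
        klg q ((-k : ℤ) : ZMod q) ((N + 1 - q + i : ℕ) : ZMod q) := by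
      rw [Finset.sum_filter]
      have : Finset.Ioc (N - q) N = Finset.Ico (N + 1 - q) (N + 1) := by
        ext x; simp only [Finset.mem_Ioc, Finset.mem_Ico]; omega
      rw [this, Finset.sum_Ico_eq_sum_range]
      have : N + 1 - (N + 1 - q) = q := by omega
      rw [this]
      apply Finset.sum_congr rfl
      intro i _
      split_ifs with h
      · rw [exp_farP q _ h]
      · have : ¬ IsUnit ((N + 1 - q + i : ℕ) : ZMod q) := by
          rw [ZMod.isUnit_iff_coprime]
          exact fun h' => h h'.symm
        simp only [klg, this, if_false, mul_zero]
    rw [e1]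
    have hM : 1 ≤ N + 1 - q := by omega
    have hab := abel_bound (fun i => klg q ((-k : ℤ) : ZMod q) ((N + 1 - q + i : ℕ) : ZMod q))
      (fun i => gapw δ q (N + 1 - q + i)) ?_ (fun i => le_max_left _ _)
      (C * (q : ℝ) ^ ((23 : ℝ) / 24) * (2 + Real.log q)) q (fun j hj => hinc q _ j hj)
    · refine hab.trans ?_
      have hcast : (((N + 1 - q + 0 : ℕ)) : ℝ) = (N : ℝ) + 1 - q := by
        rw [add_zero, Nat.cast_sub (by omega)]; simp
      have hlog : 0 ≤ Real.log q := Real.log_natCast_nonneg q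
      have hw : gapw δ q (N + 1 - q + 0) ≤ 1 / N * (1 / (q : ℝ) + 1 / ((N : ℝ) + 1 - q)) := by
        have hpos : 0 < (N : ℝ) + 1 - q := by linarith
        unfold gapw
        rw [hcast]
        have e : 1 / ((q : ℝ) * ((N : ℝ) + 1 - q)) ≤ 1 / N * (1 / (q : ℝ) + 1 / ((N : ℝ) + 1 - q)) := by
          have : 1 / N * (1 / (q : ℝ) + 1 / ((N : ℝ) + 1 - q)) =
            ((N : ℝ) + 1) / N * (1 / ((q : ℝ) * ((N : ℝ) + 1 - q))) := by
            field_simp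
            ring
          rw [this]
          have h1 : 1 ≤ ((N : ℝ) + 1) / N := by rw [le_div_iff₀ N0]; linarith
          have h2 : 0 ≤ 1 / ((q : ℝ) * ((N : ℝ) + 1 - q)) := by positivity
          nlinarith
        apply max_le
        · positivity
        · linarith
      have : (0 : ℝ) ≤ gapw δ q (N + 1 - q + 0) := le_max_left _ _
      gcongr
    · intro i j hij
      simp only [gapw]
      apply max_le_max le_rfl
      apply sub_le_sub_right
      have : (0 : ℝ) < ((N + 1 - q + i : ℕ) : ℝ) := by
        have : 0 < N + 1 - q + i := by omega
        exact_mod_cast this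
      gcongr
  refine (norm_sum_le_of_le _ hq).trans ?_
  rw [← Finset.mul_sum, ← Finset.mul_sum, Finset.sum_add_distrib]
  have href : ∑ q ∈ Finset.Icc 1 N, 1 / ((N : ℝ) + 1 - q) = ∑ q ∈ Finset.Icc 1 N, 1 / (q : ℝ) := by
    refine Finset.sum_bij (fun q _ => N + 1 - q) ?_ ?_ ?_ ?_
    · intro q hq; simp only [Finset.mem_Icc] at hq ⊢; omega
    · intro a ha b hb h; simp only [Finset.mem_Icc] at ha hb; omega
    · intro b hb; simp only [Finset.mem_Icc] at hb
      exact ⟨N + 1 - b, by simp only [Finset.mem_Icc]; omega, by omega⟩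
    · intro q hq; simp only [Finset.mem_Icc] at hq
      rw [Nat.cast_sub (by omega)]; simp
  rw [href]
  have hh := harm_bound N
  have hl : 0 ≤ Real.log N := Real.log_natCast_nonneg N
  calc _ ≤ C * (N : ℝ) ^ ((23 : ℝ) / 24) * (2 + Real.log N) * (1 / N * ((1 + Real.log N) + (1 + Real.log N))) := by
        gcongr
    _ = _ := by ring

/-- points at distance at least `δ/2` from all fractions of denominator at most `N` -/
def avoid (N : ℕ) (δ : ℝ) : Set ℝ :=
  {x | ∀ q : ℕ, 0 < q → q ≤ N → ∀ p : ℤ, δ / 2 ≤ |x - p / q|}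

noncomputable def lft (x : (_ : ℕ) × ℕ) : ℝ := (farP x.1 x.2 : ℝ) / x.1
noncomputable def rgt (x : (_ : ℕ) × ℕ) : ℝ := lft x + 1 / ((x.1 : ℝ) * x.2)

lemma mem_fareySet (N : ℕ) (x : (_ : ℕ) × ℕ) : x ∈ fareySet N ↔
    0 < x.1 ∧ x.1 ≤ N ∧ 0 < x.2 ∧ x.2 ≤ N ∧ N < x.1 + x.2 ∧ Nat.Coprime x.1 x.2 := by
  simp only [fareySet, Finset.mem_sigma, Finset.mem_Icc, Finset.mem_filter, Finset.mem_Ioc]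
  constructor
  · rintro ⟨⟨h1, h2⟩, ⟨h3, h4⟩, h5⟩
    refine ⟨by omega, h2, by omega, h4, by omega, h5⟩
  · rintro ⟨h1, h2, h3, h4, h5, h6⟩
    exact ⟨⟨h1, h2⟩, ⟨by omega, h4⟩, h6⟩

lemma farP_lt (q q' : ℕ) (hq : 0 < q) : farP q q' < q := by
  have : NeZero q := ⟨by omega⟩
  exact ZMod.val_lt _

lemma farP_det (q q' : ℕ) (hq : 0 < q) (hc : Nat.Coprime q q') :
    ∃ p' : ℕ, p' * q = farP q q' * q' + 1 := by
  have : NeZero q := ⟨by omega⟩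
  have h : q ∣ farP q q' * q' + 1 := by
    rw [← ZMod.natCast_eq_zero_iff]
    push_cast
    rw [farP, ZMod.natCast_zmod_val]
    have := ZMod.coe_mul_inv_eq_one q' hc.symm
    linear_combination -this
  obtain ⟨p', hp'⟩ := h
  exact ⟨p', by rw [hp']; ring⟩

lemma farP_unique (q q' p p' : ℕ) (hq : 0 < q) (hp : p < q) (h : p' * q = p * q' + 1) :
    farP q q' = p ∧ Nat.Coprime q q' := by
  have : NeZero q := ⟨by omega⟩
  have hc : Nat.Coprime q q' := by
    have h1 : Nat.gcd q q' ∣ 1 := by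
      have h2 : Nat.gcd q q' ∣ p * q' + 1 := h ▸ (Nat.gcd_dvd_left q q').mul_left p'
      exact (Nat.dvd_add_right ((Nat.gcd_dvd_right q q').mul_left p)).1 h2
    exact Nat.dvd_one.1 h1
  refine ⟨?_, hc⟩
  have h1 : (p : ZMod q) * q' + 1 = 0 := by
    have : ((p' * q : ℕ) : ZMod q) = ((p * q' + 1 : ℕ) : ZMod q) := by rw [h]
    push_cast at this
    rw [← this]; simp
  have h2 := ZMod.coe_mul_inv_eq_one q' hc.symm
  have h3 : -(q' : ZMod q)⁻¹ = (p : ZMod q) := by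
    linear_combination (p : ZMod q) * h2 - (q' : ZMod q)⁻¹ * h1
  rw [farP, h3, ZMod.val_cast_of_lt hp]

lemma rgt_eq (x : (_ : ℕ) × ℕ) (h1 : 0 < x.1) (h2 : 0 < x.2) (p' : ℕ)
    (h : p' * x.1 = farP x.1 x.2 * x.2 + 1) : rgt x = (p' : ℝ) / x.2 := by
  have h1' : (0 : ℝ) < x.1 := by exact_mod_cast h1
  have h2' : (0 : ℝ) < x.2 := by exact_mod_cast h2
  have h' : (p' : ℝ) * x.1 = farP x.1 x.2 * x.2 + 1 := by exact_mod_cast h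
  unfold rgt lft
  field_simp
  linarith

lemma farey_between (p q p' q' a b : ℤ) (hq : 0 < q) (hq' : 0 < q') (hb : 0 < b)
    (hdet : p' * q = p * q' + 1)
    (h1 : (p : ℝ) / q < a / b) (h2 : (a : ℝ) / b < p' / q') : q + q' ≤ b := by
  have hqr : (0 : ℝ) < q := by exact_mod_cast hq
  have hqr' : (0 : ℝ) < q' := by exact_mod_cast hq'
  have hbr : (0 : ℝ) < b := by exact_mod_cast hb
  rw [div_lt_div_iff₀ hqr hbr] at h1
  rw [div_lt_div_iff₀ hbr hqr'] at h2
  have h1' : p * b < a * q := by exact_mod_cast h1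
  have h2' : a * q' < p' * b := by exact_mod_cast h2
  have e : b = (a * q - p * b) * q' + (p' * b - a * q') * q := by
    linear_combination (-b) * hdet
  have i1 : q' ≤ (a * q - p * b) * q' := by nlinarith
  have i2 : q ≤ (p' * b - a * q') * q := by nlinarith
  linarith

lemma no_frac_in_gap (N : ℕ) (x : (_ : ℕ) × ℕ) (hx : x ∈ fareySet N) (b : ℕ) (hb : 0 < b) (hbN : b ≤ N)
    (a : ℤ) : (a : ℝ) / b ≤ lft x ∨ rgt x ≤ (a : ℝ) / b := by
  rw [mem_fareySet] at hx
  obtain ⟨h1, h2, h3, h4, h5, h6⟩ := hx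
  by_contra hcon
  push Not at hcon
  obtain ⟨p', hp'⟩ := farP_det x.1 x.2 h1 h6
  have hr := rgt_eq x h1 h3 p' hp'
  have := farey_between (farP x.1 x.2) x.1 p' x.2 a b (by exact_mod_cast h1) (by exact_mod_cast h3)
    (by exact_mod_cast hb) (by exact_mod_cast hp') (by simpa [lft] using hcon.1)
    (by rw [hr] at hcon; simpa using hcon.2)
  omega

lemma lft_eq_frac (x : (_ : ℕ) × ℕ) : lft x = ((farP x.1 x.2 : ℤ) : ℝ) / (x.1 : ℕ) := by
  simp [lft]

lemma rgt_eq_frac (N : ℕ) (x : (_ : ℕ) × ℕ) (hx : x ∈ fareySet N) :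
    ∃ p' : ℕ, p' * x.1 = farP x.1 x.2 * x.2 + 1 ∧ rgt x = ((p' : ℤ) : ℝ) / (x.2 : ℕ) := by
  rw [mem_fareySet] at hx
  obtain ⟨h1, h2, h3, h4, h5, h6⟩ := hx
  obtain ⟨p', hp'⟩ := farP_det x.1 x.2 h1 h6
  exact ⟨p', hp', by rw [rgt_eq x h1 h3 p' hp']; simp⟩

lemma lft_lt_rgt (N : ℕ) (x : (_ : ℕ) × ℕ) (hx : x ∈ fareySet N) : lft x < rgt x := by
  rw [mem_fareySet] at hx
  obtain ⟨h1, h2, h3, h4, h5, h6⟩ := hx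
  have h1' : (0 : ℝ) < x.1 := by exact_mod_cast h1
  have h2' : (0 : ℝ) < x.2 := by exact_mod_cast h3
  unfold rgt
  have : 0 < 1 / ((x.1 : ℝ) * x.2) := by positivity
  linarith

lemma coprime_frac_eq (a b c d : ℕ) (hb : 0 < b) (hd : 0 < d) (h1 : Nat.Coprime a b)
    (h2 : Nat.Coprime c d) (h : (a : ℝ) / b = c / d) : b = d := by
  have hb' : (b : ℝ) ≠ 0 := by positivity
  have hd' : (d : ℝ) ≠ 0 := by positivity
  rw [div_eq_div_iff hb' hd'] at h
  have h' : a * d = c * b := by exact_mod_cast h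
  apply Nat.dvd_antisymm
  · exact h1.symm.dvd_of_dvd_mul_left (h' ▸ Dvd.intro_left c rfl)
  · exact h2.symm.dvd_of_dvd_mul_left (h'.symm ▸ Dvd.intro_left a rfl)

lemma coprime_of_det (p q p' q' : ℕ) (h : p' * q = p * q' + 1) :
    Nat.Coprime p q ∧ Nat.Coprime p' q' := by
  constructor
  · have h2 : Nat.gcd p q ∣ p * q' + 1 := h ▸ (Nat.gcd_dvd_right p q).mul_left p'
    exact Nat.dvd_one.1 ((Nat.dvd_add_right ((Nat.gcd_dvd_left p q).mul_right q')).1 h2)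
  · have h2 : Nat.gcd p' q' ∣ p * q' + 1 := h ▸ (Nat.gcd_dvd_left p' q').mul_right q
    exact Nat.dvd_one.1 ((Nat.dvd_add_right ((Nat.gcd_dvd_right p' q').mul_left p)).1 h2)

lemma gap_disjoint (N : ℕ) (x y : (_ : ℕ) × ℕ) (hx : x ∈ fareySet N) (hy : y ∈ fareySet N) (t : ℝ)
    (htx : t ∈ Set.Ioo (lft x) (rgt x)) (hty : t ∈ Set.Ioo (lft y) (rgt y)) : x = y := by
  obtain ⟨px, hpx, ex⟩ := rgt_eq_frac N x hx
  obtain ⟨py, hpy, ey⟩ := rgt_eq_frac N y hy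
  have hx' := (mem_fareySet N x).1 hx
  have hy' := (mem_fareySet N y).1 hy
  have l1 := no_frac_in_gap N x hx y.1 hy'.1 hy'.2.1 (farP y.1 y.2)
  have l2 := no_frac_in_gap N y hy x.1 hx'.1 hx'.2.1 (farP x.1 x.2)
  have r1 := no_frac_in_gap N x hx y.2 hy'.2.2.1 hy'.2.2.2.1 py
  have r2 := no_frac_in_gap N y hy x.2 hx'.2.2.1 hx'.2.2.2.1 px
  rw [← lft_eq_frac] at l1 l2
  rw [← ey] at r1
  rw [← ex] at r2
  obtain ⟨a1, a2⟩ := htx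
  obtain ⟨b1, b2⟩ := hty
  have hl : lft x = lft y := by
    rcases l1 with l1 | l1
    · rcases l2 with l2 | l2
      · exact le_antisymm l2 l1
      · linarith
    · linarith
  have hr : rgt x = rgt y := by
    rcases r1 with r1 | r1
    · linarith
    · rcases r2 with r2 | r2
      · linarith
      · exact le_antisymm r1 r2
  have cx := coprime_of_det _ _ _ _ hpx
  have cy := coprime_of_det _ _ _ _ hpy
  have e1 : x.1 = y.1 := coprime_frac_eq _ _ _ _ hx'.1 hy'.1 cx.1 cy.1 hl
  have e2 : x.2 = y.2 := by
    refine coprime_frac_eq px _ py _ hx'.2.2.1 hy'.2.2.1 cx.2 cy.2 ?_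
    rw [ex, ey] at hr
    simpa using hr
  obtain ⟨x1, x2⟩ := x
  obtain ⟨y1, y2⟩ := y
  simp only at e1 e2
  rw [e1, e2]

lemma farey_cover_aux (x : ℝ) (hx : Irrational x) (h0 : 0 < x) (h1 : x < 1) (N : ℕ) (hN : 1 ≤ N) :
    ∃ p q p' q' : ℕ, 0 < q ∧ 0 < q' ∧ q ≤ N ∧ q' ≤ N ∧ N < q + q' ∧ p' * q = p * q' + 1 ∧
      (p : ℝ) / q < x ∧ x < (p' : ℝ) / q' := by
  induction N, hN using Nat.le_induction with
  | base => exact ⟨0, 1, 1, 1, by simp [h0, h1]⟩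
  | succ N hN ih =>
    obtain ⟨p, q, p', q', hq, hq', hqN, hqN', hs, hdet, hl, hr⟩ := ih
    by_cases hc : N + 1 < q + q'
    · exact ⟨p, q, p', q', hq, hq', by omega, by omega, hc, hdet, hl, hr⟩
    · have hne : x ≠ ((p + p' : ℕ) : ℝ) / ((q + q' : ℕ) : ℝ) := by
        intro h
        apply hx
        exact ⟨((p + p' : ℕ) : ℚ) / ((q + q' : ℕ) : ℚ), by rw [h]; push_cast; ring⟩
      rcases lt_or_gt_of_ne hne with h | h
      · exact ⟨p, q, p + p', q + q', hq, by omega, by omega, by omega, by omega,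
          by nlinarith, hl, h⟩
      · exact ⟨p + p', q + q', p', q', by omega, hq', by omega, by omega, by omega,
          by nlinarith, h, hr⟩

lemma farey_cover (x : ℝ) (hx : Irrational x) (h0 : 0 < x) (h1 : x < 1) (N : ℕ) (hN : 1 ≤ N) :
    ∃ y ∈ fareySet N, x ∈ Set.Ioo (lft y) (rgt y) := by
  obtain ⟨p, q, p', q', hq, hq', hqN, hqN', hs, hdet, hl, hr⟩ := farey_cover_aux x hx h0 h1 N hN
  have hpq : p < q := by
    have hq0 : (0 : ℝ) < q := by exact_mod_cast hq
    have : (p : ℝ) / q < 1 := hl.trans h1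
    rw [div_lt_one hq0] at this
    exact_mod_cast this
  obtain ⟨hf, hc⟩ := farP_unique q q' p p' hq hpq hdet
  refine ⟨⟨q, q'⟩, (mem_fareySet _ _).2 ⟨hq, hqN, hq', hqN', hs, hc⟩, ?_, ?_⟩
  · simpa [lft, hf] using hl
  · rw [rgt_eq ⟨q, q'⟩ hq hq' p' (by simpa [hf] using hdet)]
    exact hr

lemma gap_subset (N : ℕ) (x : (_ : ℕ) × ℕ) (hx : x ∈ fareySet N) : 0 ≤ lft x ∧ rgt x ≤ 1 := by
  obtain ⟨px, hpx, ex⟩ := rgt_eq_frac N x hx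
  have hx' := (mem_fareySet N x).1 hx
  constructor
  · unfold lft; positivity
  · rw [ex]
    have h2 : (0 : ℝ) < x.2 := by exact_mod_cast hx'.2.2.1
    rw [div_le_one h2]
    have hlt := farP_lt x.1 x.2 hx'.1
    have : px ≤ x.2 := by
      have h3 : px * x.1 ≤ x.2 * x.1 := by
        rw [hpx]
        have := hx'.2.2.1
        have : (farP x.1 x.2 + 1) * x.2 ≤ x.1 * x.2 := Nat.mul_le_mul_right _ hlt
        nlinarith
      exact Nat.le_of_mul_le_mul_right h3 hx'.1
    exact_mod_cast this

lemma avoid_iff (N : ℕ) (δ : ℝ) (x : (_ : ℕ) × ℕ) (hx : x ∈ fareySet N) (t : ℝ)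
    (ht : t ∈ Set.Ioo (lft x) (rgt x)) :
    t ∈ avoid N δ ↔ t ∈ Set.Icc (lft x + δ / 2) (rgt x - δ / 2) := by
  obtain ⟨px, hpx, ex⟩ := rgt_eq_frac N x hx
  have hx' := (mem_fareySet N x).1 hx
  obtain ⟨t1, t2⟩ := ht
  constructor
  · intro h
    have a1 := h x.1 hx'.1 hx'.2.1 (farP x.1 x.2)
    have a2 := h x.2 hx'.2.2.1 hx'.2.2.2.1 px
    rw [← lft_eq_frac, abs_of_pos (by linarith)] at a1
    rw [← ex, abs_of_neg (by linarith)] at a2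
    constructor <;> linarith
  · rintro ⟨h1, h2⟩ q hq hqN p
    rcases no_frac_in_gap N x hx q hq hqN p with h | h
    · exact le_trans (by linarith) (le_abs_self _)
    · exact le_trans (by linarith) (neg_le_abs _)

lemma avoid_ae (N : ℕ) (hN : 1 ≤ N) (δ : ℝ) (hδ : 0 < δ) :
    (Set.Ioo (0 : ℝ) 1 ∩ avoid N δ : Set ℝ) =ᵐ[volume]
      (⋃ x ∈ fareySet N, Set.Icc (lft x + δ / 2) (rgt x - δ / 2) : Set ℝ) := by
  have hirr : ∀ᵐ t : ℝ, Irrational t := by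
    have : (Set.range ((↑) : ℚ → ℝ)).Countable := Set.countable_range _
    exact this.ae_notMem volume
  filter_upwards [hirr] with t ht
  apply propext
  constructor
  · rintro ⟨⟨h0, h1⟩, h⟩
    obtain ⟨y, hy, hty⟩ := farey_cover t ht h0 h1 N hN
    exact Set.mem_biUnion hy ((avoid_iff N δ y hy t hty).1 h)
  · intro h
    have h' : t ∈ (⋃ x ∈ fareySet N, Set.Icc (lft x + δ / 2) (rgt x - δ / 2) : Set ℝ) := h
    simp only [Set.mem_iUnion] at h'
    obtain ⟨y, hy, hty⟩ := h'
    have hin : t ∈ Set.Ioo (lft y) (rgt y) := ⟨by linarith [hty.1], by linarith [hty.2]⟩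
    have := gap_subset N y hy
    exact ⟨⟨by linarith [hin.1], by linarith [hin.2]⟩, (avoid_iff N δ y hy t hin).2 hty⟩

lemma integral_avoid (N : ℕ) (hN : 1 ≤ N) (δ : ℝ) (hδ : 0 < δ) (f : ℝ → ℂ) (hf : Continuous f) :
    ∫ t in Set.Ioo (0 : ℝ) 1 ∩ avoid N δ, f t =
      ∑ x ∈ fareySet N, ∫ t in Set.Icc (lft x + δ / 2) (rgt x - δ / 2), f t := by
  rw [setIntegral_congr_set (avoid_ae N hN δ hδ)]
  apply integral_biUnion_finset
  · intro x _; exact measurableSet_Icc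
  · intro x hx y hy hxy
    rw [Function.onFun, Set.disjoint_left]
    intro t h1 h2
    apply hxy
    exact gap_disjoint N x y hx hy t ⟨by linarith [h1.1], by linarith [h1.2]⟩
      ⟨by linarith [h2.1], by linarith [h2.2]⟩
  · intro x _
    exact hf.continuousOn.integrableOn_Icc

lemma volume_gap (δ : ℝ) (x : (_ : ℕ) × ℕ) :
    volume.real (Set.Icc (lft x + δ / 2) (rgt x - δ / 2)) = gapw δ x.1 x.2 := by
  rw [Real.volume_real_Icc]
  unfold gapw rgt
  rw [max_comm]
  congr 1
  ring

lemma sum_gapw_le (N : ℕ) (hN : 1 ≤ N) (δ : ℝ) (hδ : 0 < δ) :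
    ∑ x ∈ fareySet N, gapw δ x.1 x.2 = volume.real (Set.Ioo (0 : ℝ) 1 ∩ avoid N δ) := by
  have h := integral_avoid N hN δ hδ (fun _ => 1) continuous_const
  simp only [setIntegral_const, volume_gap] at h
  have h2 : ((∑ x ∈ fareySet N, gapw δ x.1 x.2 : ℝ) : ℂ) =
      ((volume.real (Set.Ioo (0 : ℝ) 1 ∩ avoid N δ) : ℝ) : ℂ) := by
    push_cast
    simpa using h.symm
  exact_mod_cast h2

lemma exp_lip (k : ℤ) (s t : ℝ) :
    ‖Complex.exp (2 * Real.pi * Complex.I * k * (t : ℝ)) -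
      Complex.exp (2 * Real.pi * Complex.I * k * (s : ℝ))‖ ≤ 2 * Real.pi * |(k : ℝ)| * |t - s| := by
  have e : Complex.exp (2 * Real.pi * Complex.I * k * (t : ℝ)) -
      Complex.exp (2 * Real.pi * Complex.I * k * (s : ℝ)) =
      Complex.exp (((2 * Real.pi * k * s : ℝ) : ℂ) * Complex.I) *
        (Complex.exp (Complex.I * ((2 * Real.pi * k * (t - s) : ℝ) : ℂ)) - 1) := by
    rw [mul_sub, mul_one, ← Complex.exp_add]
    congr 2 <;> (push_cast; ring)
  rw [e, norm_mul, Complex.norm_exp_ofReal_mul_I, one_mul]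
  refine (Real.norm_exp_I_mul_ofReal_sub_one_le).trans ?_
  rw [Real.norm_eq_abs, abs_mul, abs_mul, abs_mul, abs_of_pos Real.pi_pos]
  simp

lemma gap_length_le (N : ℕ) (hN : 1 ≤ N) (x : (_ : ℕ) × ℕ) (hx : x ∈ fareySet N) :
    rgt x - lft x ≤ 1 / N := by
  have hx' := (mem_fareySet N x).1 hx
  obtain ⟨h1, h2, h3, h4, h5, h6⟩ := hx'
  unfold rgt
  rw [add_sub_cancel_left]
  have : N ≤ x.1 * x.2 := by nlinarith
  have : (N : ℝ) ≤ x.1 * x.2 := by exact_mod_cast this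
  have : (0 : ℝ) < N := by exact_mod_cast hN
  gcongr

lemma fourier_avoid (k : ℤ) (N : ℕ) (hN : 1 ≤ N) (δ : ℝ) (hδ : 0 < δ) :
    ‖(∫ t in Set.Ioo (0 : ℝ) 1 ∩ avoid N δ, Complex.exp (2 * Real.pi * Complex.I * k * (t : ℝ))) -
      ∑ x ∈ fareySet N, (gapw δ x.1 x.2 : ℂ) *
      Complex.exp (2 * Real.pi * Complex.I * k * ((farP x.1 x.2 : ℝ) / (x.1 : ℝ) : ℝ))‖ ≤
      2 * Real.pi * |(k : ℝ)| / N := by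
  have hc : Continuous (fun t : ℝ => Complex.exp (2 * Real.pi * Complex.I * k * (t : ℝ))) := by
    fun_prop
  rw [integral_avoid N hN δ hδ _ hc, ← Finset.sum_sub_distrib]
  have hN0 : (0 : ℝ) < N := by exact_mod_cast hN
  have hb : ∀ x ∈ fareySet N,
      ‖(∫ t in Set.Icc (lft x + δ / 2) (rgt x - δ / 2),
        Complex.exp (2 * Real.pi * Complex.I * k * (t : ℝ))) - (gapw δ x.1 x.2 : ℂ) *
      Complex.exp (2 * Real.pi * Complex.I * k * ((farP x.1 x.2 : ℝ) / (x.1 : ℝ) : ℝ))‖ ≤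
      2 * Real.pi * |(k : ℝ)| / N * gapw δ x.1 x.2 := by
    intro x hx
    have e : (gapw δ x.1 x.2 : ℂ) *
      Complex.exp (2 * Real.pi * Complex.I * k * ((farP x.1 x.2 : ℝ) / (x.1 : ℝ) : ℝ)) =
      ∫ t in Set.Icc (lft x + δ / 2) (rgt x - δ / 2),
        Complex.exp (2 * Real.pi * Complex.I * k * ((lft x : ℝ) : ℂ)) := by
      rw [setIntegral_const, volume_gap, Complex.real_smul]; rfl
    rw [e, ← integral_sub hc.continuousOn.integrableOn_Icc continuous_const.continuousOn.integrableOn_Icc,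
      ← volume_gap]
    apply norm_setIntegral_le_of_norm_le_const (by simp)
    intro t ht
    refine (exp_lip k (lft x) t).trans ?_
    have h1 := gap_length_le N hN x hx
    rw [abs_of_nonneg (show 0 ≤ t - lft x by linarith [ht.1]), div_eq_mul_one_div _ (N : ℝ)]
    have : t - lft x ≤ 1 / N := by linarith [ht.2]
    have := Real.pi_pos
    gcongr
  refine (norm_sum_le_of_le _ hb).trans ?_
  rw [← Finset.mul_sum, sum_gapw_le N hN δ hδ]
  have h1 : volume.real (Set.Ioo (0 : ℝ) 1 ∩ avoid N δ) ≤ 1 := by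
    calc _ ≤ volume.real (Set.Ioo (0 : ℝ) 1) :=
          measureReal_mono Set.inter_subset_left (by simp)
      _ = 1 := by simp
  have := Real.pi_pos
  exact mul_le_of_le_one_right (by positivity) h1

noncomputable def Gw (c X : ℝ) (e e' : ℕ) : ℝ :=
  if 1 ≤ e ∧ 1 ≤ e' ∧ (e : ℝ) ≤ X ∧ (e' : ℝ) ≤ X ∧ X < (e : ℝ) + e' then
    max 0 (1 / ((e : ℝ) * e') - c / X ^ 2) else 0

noncomputable def Rs (c X : ℝ) : ℝ :=
  ∑ e ∈ Finset.Icc 1 ⌊X⌋₊, ∑ e' ∈ Finset.Icc 1 ⌊X⌋₊, Gw c X e e'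

def cell (X : ℝ) (e e' : ℕ) : Set (ℝ × ℝ) :=
  Set.Ioc (((e : ℝ) - 1) / X) ((e : ℝ) / X) ×ˢ Set.Ioc (((e' : ℝ) - 1) / X) ((e' : ℝ) / X)

lemma cell_meas (X : ℝ) (e e' : ℕ) : MeasurableSet (cell X e e') :=
  measurableSet_Ioc.prod measurableSet_Ioc

noncomputable def Fs (c X : ℝ) (z : ℝ × ℝ) : ℝ :=
  ∑ e ∈ Finset.Icc 1 ⌊X⌋₊, ∑ e' ∈ Finset.Icc 1 ⌊X⌋₊,
    (cell X e e').indicator (fun _ => X ^ 2 * Gw c X e e') z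

lemma cell_vol (X : ℝ) (hX : 0 < X) (e e' : ℕ) : volume (cell X e e') = ENNReal.ofReal (1 / X ^ 2) := by
  unfold cell
  rw [Measure.volume_eq_prod, Measure.prod_prod, Real.volume_Ioc, Real.volume_Ioc, ← ENNReal.ofReal_mul]
  · congr 1
    field_simp
    ring
  · have : (e : ℝ) / X - (e - 1) / X = 1 / X := by ring
    rw [this]; positivity

lemma Fs_meas (c X : ℝ) : Measurable (Fs c X) := by
  unfold Fs
  refine Finset.measurable_fun_sum _ fun e _ => Finset.measurable_fun_sum _ fun e' _ => ?_
  exact measurable_const.indicator (cell_meas X e e')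

lemma Fs_int (c X : ℝ) (hX : 0 < X) : ∫ z, Fs c X z = Rs c X := by
  unfold Fs Rs
  have hi : ∀ e e' : ℕ, Integrable ((cell X e e').indicator (fun _ => X ^ 2 * Gw c X e e')) := by
    intro e e'
    rw [integrable_indicator_iff (cell_meas X e e')]
    apply integrableOn_const
    · rw [cell_vol X hX]; simp
    · exact enorm_ne_top
  rw [integral_finsetSum _ fun e _ => integrable_finsetSum _ fun e' _ => hi e e']
  refine Finset.sum_congr rfl fun e _ => ?_
  rw [integral_finsetSum _ fun e' _ => hi e e']
  refine Finset.sum_congr rfl fun e' _ => ?_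
  rw [integral_indicator (cell_meas X e e'), setIntegral_const, measureReal_def, cell_vol X hX,
    ENNReal.toReal_ofReal (by positivity), smul_eq_mul]
  field_simp

lemma mem_cell (X : ℝ) (hX : 0 < X) (e e' : ℕ) (he : 1 ≤ e) (he' : 1 ≤ e') (z : ℝ × ℝ) :
    z ∈ cell X e e' ↔ ⌈z.1 * X⌉₊ = e ∧ ⌈z.2 * X⌉₊ = e' := by
  rw [Nat.ceil_eq_iff (by omega), Nat.ceil_eq_iff (by omega)]
  simp only [cell, Set.mem_prod, Set.mem_Ioc]
  rw [div_lt_iff₀ hX, div_lt_iff₀ hX, le_div_iff₀ hX, le_div_iff₀ hX, Nat.cast_sub he, Nat.cast_sub he']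
  simp

lemma Fs_eq (c X : ℝ) (hX : 0 < X) (z : ℝ × ℝ) :
    Fs c X z = X ^ 2 * Gw c X ⌈z.1 * X⌉₊ ⌈z.2 * X⌉₊ := by
  unfold Fs
  have h1 : ∀ e ∈ Finset.Icc 1 ⌊X⌋₊, ∀ e' ∈ Finset.Icc 1 ⌊X⌋₊,
      (cell X e e').indicator (fun _ => X ^ 2 * Gw c X e e') z =
      if e' = ⌈z.2 * X⌉₊ then (if e = ⌈z.1 * X⌉₊ then X ^ 2 * Gw c X e e' else 0) else 0 := by
    intro e he e' he'
    rw [Finset.mem_Icc] at he he'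
    classical
    rw [Set.indicator_apply]
    simp only [mem_cell X hX e e' he.1 he'.1]
    split_ifs <;> first | rfl | (exfalso; tauto)
  rw [Finset.sum_congr rfl fun e he => Finset.sum_congr rfl fun e' he' => h1 e he e' he']
  simp only [Finset.sum_ite_eq']
  by_cases h2 : ⌈z.2 * X⌉₊ ∈ Finset.Icc 1 ⌊X⌋₊
  · simp only [h2, if_true, Finset.sum_ite_eq']
    by_cases h3 : ⌈z.1 * X⌉₊ ∈ Finset.Icc 1 ⌊X⌋₊
    · simp only [h3, if_true]
    · simp only [h3, if_false]
      rw [Gw, if_neg, mul_zero]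
      rintro ⟨a, -, b, -⟩
      exact h3 (Finset.mem_Icc.2 ⟨a, Nat.le_floor b⟩)
  · simp only [h2, if_false, Finset.sum_const_zero]
    rw [Gw, if_neg, mul_zero]
    rintro ⟨-, a, -, b, -⟩
    exact h2 (Finset.mem_Icc.2 ⟨a, Nat.le_floor b⟩)

/-- the limiting density -/
noncomputable def Hl (c : ℝ) (z : ℝ × ℝ) : ℝ :=
  if 0 < z.1 ∧ z.1 < 1 ∧ 0 < z.2 ∧ z.2 < 1 ∧ 1 < z.1 + z.2 then max 0 (1 / (z.1 * z.2) - c) else 0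

lemma Fs_eq' (c X : ℝ) (hX : 0 < X) (z : ℝ × ℝ) :
    Fs c X z = if 0 < z.1 ∧ 0 < z.2 ∧ (⌈z.1 * X⌉₊ : ℝ) / X ≤ 1 ∧ (⌈z.2 * X⌉₊ : ℝ) / X ≤ 1 ∧
      1 < (⌈z.1 * X⌉₊ : ℝ) / X + (⌈z.2 * X⌉₊ : ℝ) / X then
      max 0 (1 / ((⌈z.1 * X⌉₊ : ℝ) / X * ((⌈z.2 * X⌉₊ : ℝ) / X)) - c) else 0 := by
  rw [Fs_eq c X hX]
  unfold Gw
  have h1 : ∀ u : ℝ, 1 ≤ ⌈u * X⌉₊ ↔ 0 < u := by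
    intro u
    rw [Nat.one_le_iff_ne_zero, ← Nat.pos_iff_ne_zero, Nat.ceil_pos]
    exact mul_pos_iff_of_pos_right hX
  simp only [h1]
  simp only [div_le_one hX, ← add_div, one_lt_div hX]
  split_ifs with h
  · rw [mul_max_of_nonneg _ _ (by positivity), mul_zero]
    congr 1
    have a := (h1 _).2 h.1
    have b := (h1 _).2 h.2.1
    have a' : (0 : ℝ) < ⌈z.1 * X⌉₊ := by exact_mod_cast a
    have b' : (0 : ℝ) < ⌈z.2 * X⌉₊ := by exact_mod_cast b
    field_simp
  · simp

lemma Fs_tendsto (c : ℝ) (z : ℝ × ℝ) (h1 : z.1 ≠ 1) (h2 : z.2 ≠ 1) (h3 : z.1 + z.2 ≠ 1) :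
    Tendsto (fun X => Fs c X z) atTop (nhds (Hl c z)) := by
  by_cases p1 : 0 < z.1
  swap
  · have : Hl c z = 0 := by rw [Hl, if_neg]; tauto
    rw [this]
    refine tendsto_const_nhds.congr' ?_
    filter_upwards [eventually_gt_atTop 0] with X hX
    rw [Fs_eq' c X hX, if_neg]; tauto
  by_cases p2 : 0 < z.2
  swap
  · have : Hl c z = 0 := by rw [Hl, if_neg]; tauto
    rw [this]
    refine tendsto_const_nhds.congr' ?_
    filter_upwards [eventually_gt_atTop 0] with X hX
    rw [Fs_eq' c X hX, if_neg]; tauto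
  have t1 := tendsto_nat_ceil_mul_div_atTop p1.le
  have t2 := tendsto_nat_ceil_mul_div_atTop p2.le
  by_cases q : z.1 < 1 ∧ z.2 < 1 ∧ 1 < z.1 + z.2
  · have : Hl c z = max 0 (1 / (z.1 * z.2) - c) := by rw [Hl, if_pos]; tauto
    rw [this]
    have t3 : Tendsto (fun X : ℝ => max 0 (1 / ((⌈z.1 * X⌉₊ : ℝ) / X * ((⌈z.2 * X⌉₊ : ℝ) / X)) - c)) atTop
        (nhds (max 0 (1 / (z.1 * z.2) - c))) := by
      refine tendsto_const_nhds.max (Tendsto.sub_const ?_ _)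
      exact tendsto_const_nhds.div (t1.mul t2) (by positivity)
    refine t3.congr' ?_
    filter_upwards [eventually_gt_atTop 0, t1.eventually_lt_const q.1, t2.eventually_lt_const q.2.1,
      (t1.add t2).eventually_const_lt q.2.2] with X hX a1 a2 a3
    rw [Fs_eq' c X hX, if_pos]
    exact ⟨p1, p2, a1.le, a2.le, a3⟩
  · have : Hl c z = 0 := by rw [Hl, if_neg]; tauto
    rw [this]
    refine tendsto_const_nhds.congr' ?_
    have : 1 < z.1 ∨ 1 < z.2 ∨ z.1 + z.2 < 1 := by
      by_contra! hh
      exact q ⟨lt_of_le_of_ne hh.1 h1, lt_of_le_of_ne hh.2.1 h2, lt_of_le_of_ne hh.2.2 (Ne.symm h3)⟩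
    rcases this with h | h | h
    · filter_upwards [eventually_gt_atTop 0, t1.eventually_const_lt h] with X hX a
      rw [Fs_eq' c X hX, if_neg]
      rintro ⟨-, -, b, -⟩; linarith
    · filter_upwards [eventually_gt_atTop 0, t2.eventually_const_lt h] with X hX a
      rw [Fs_eq' c X hX, if_neg]
      rintro ⟨-, -, -, b, -⟩; linarith
    · filter_upwards [eventually_gt_atTop 0, (t1.add t2).eventually_lt_const h] with X hX a
      rw [Fs_eq' c X hX, if_neg]
      rintro ⟨-, -, -, -, b⟩; linarith

lemma ae_good : ∀ᵐ z : ℝ × ℝ, z.1 ≠ 1 ∧ z.2 ≠ 1 ∧ z.1 + z.2 ≠ 1 := by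
  have m : MeasurableSet {z : ℝ × ℝ | z.1 ≠ 1 ∧ z.2 ≠ 1 ∧ z.1 + z.2 ≠ 1} := by
    have m1 : MeasurableSet {z : ℝ × ℝ | z.1 = 1} := measurableSet_eq_fun measurable_fst measurable_const
    have m2 : MeasurableSet {z : ℝ × ℝ | z.2 = 1} := measurableSet_eq_fun measurable_snd measurable_const
    have m3 : MeasurableSet {z : ℝ × ℝ | z.1 + z.2 = 1} :=
      measurableSet_eq_fun (measurable_fst.add measurable_snd) measurable_const
    exact m1.compl.inter (m2.compl.inter m3.compl)
  rw [Measure.volume_eq_prod, Measure.ae_prod_iff_ae_ae m]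
  filter_upwards [Measure.ae_ne volume 1] with u hu
  filter_upwards [Measure.ae_ne volume 1, Measure.ae_ne volume (1 - u)] with v hv hv'
  refine ⟨hu, hv, fun h => hv' ?_⟩
  have : u + v = 1 := h
  linarith

noncomputable def sq01 (u : ℝ) : ℝ := (Set.Ioo (0 : ℝ) 1).indicator (fun u => (Real.sqrt u)⁻¹) u
noncomputable def sq10 (u : ℝ) : ℝ := (Set.Ioo (0 : ℝ) 1).indicator (fun u => (Real.sqrt (1 - u))⁻¹) u

lemma sq01_int : Integrable sq01 := by
  unfold sq01
  rw [integrable_indicator_iff measurableSet_Ioo]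
  have h := intervalIntegral.intervalIntegrable_rpow' (a := 0) (b := 1) (r := -(1/2)) (by norm_num)
  rw [intervalIntegrable_iff_integrableOn_Ioo_of_le (by norm_num)] at h
  refine h.congr_fun (fun u hu => ?_) measurableSet_Ioo
  simp only
  rw [Real.rpow_neg hu.1.le, Real.sqrt_eq_rpow]

lemma sq10_int : Integrable sq10 := by
  have := sq01_int.comp_sub_left 1
  refine this.congr (ae_of_all _ fun u => ?_)
  simp only [sq01, sq10, Set.indicator_apply, Set.mem_Ioo]
  congr 1
  apply propext
  constructor <;> rintro ⟨a, b⟩ <;> constructor <;> linarith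

noncomputable def domg (z : ℝ × ℝ) : ℝ := 2 * (sq01 z.1 * sq10 z.2 + sq10 z.1 * sq01 z.2)

lemma domg_int : Integrable domg := by
  unfold domg
  rw [Measure.volume_eq_prod]
  exact ((sq01_int.mul_prod sq10_int).add (sq10_int.mul_prod sq01_int)).const_mul 2

lemma inv_bound (X a b v u : ℝ) (hX : 0 < X) (ha : 0 < a) (hu : 0 < u) (hv : v < 1) (hau : u ≤ a) (haX : 1 / X ≤ a)
    (hb : b < v + 1 / X) (hab : 1 < a + b) : 1 / a ≤ 2 * ((Real.sqrt u)⁻¹ * (Real.sqrt (1 - v))⁻¹) := by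
  have h1 : 1 - v ≤ 2 * a := by linarith
  have h0 : 0 < 1 - v := by linarith
  rw [← mul_inv, ← Real.sqrt_mul hu.le]
  have hs : 0 < Real.sqrt (u * (1 - v)) := Real.sqrt_pos.2 (by positivity)
  have h2 : Real.sqrt (u * (1 - v)) ≤ 2 * a := by
    rw [Real.sqrt_le_left (by positivity)]
    nlinarith
  rw [div_le_iff₀ ha]
  rw [← sub_nonneg]
  have : 2 * (√(u * (1 - v)))⁻¹ * a - 1 = (2 * a - √(u * (1 - v))) / √(u * (1 - v)) := by
    field_simp
  rw [this]
  exact div_nonneg (by linarith) hs.le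

lemma Fs_dom (c X : ℝ) (hc : 0 ≤ c) (hX : 0 < X) (z : ℝ × ℝ) (h1 : z.1 ≠ 1) (h2 : z.2 ≠ 1) : ‖Fs c X z‖ ≤ domg z := by
  have dn : 0 ≤ domg z := by
    have a : ∀ u, 0 ≤ sq01 u := fun u => Set.indicator_nonneg (fun _ _ => by positivity) _
    have b : ∀ u, 0 ≤ sq10 u := fun u => Set.indicator_nonneg (fun _ _ => by positivity) _
    have := a z.1; have := a z.2; have := b z.1; have := b z.2
    unfold domg; positivity
  rw [Fs_eq' c X hX]
  split_ifs with h
  swap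
  · simpa using dn
  obtain ⟨p1, p2, p3, p4, p5⟩ := h
  have key : ∀ u : ℝ, 0 < u → u ≤ (⌈u * X⌉₊ : ℝ) / X ∧ 1 / X ≤ (⌈u * X⌉₊ : ℝ) / X ∧ (⌈u * X⌉₊ : ℝ) / X < u + 1 / X := by
    intro u hu
    refine ⟨?_, ?_, ?_⟩
    · rw [le_div_iff₀ hX]; exact Nat.le_ceil _
    · have : 0 < ⌈u * X⌉₊ := Nat.ceil_pos.2 (by positivity)
      have : (1 : ℝ) ≤ ⌈u * X⌉₊ := by exact_mod_cast this
      gcongr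
    · rw [div_lt_iff₀ hX, add_mul, div_mul_cancel₀ _ hX.ne']
      exact Nat.ceil_lt_add_one (by positivity)
  obtain ⟨a1, a2, a3⟩ := key z.1 p1
  obtain ⟨b1, b2, b3⟩ := key z.2 p2
  set a := (⌈z.1 * X⌉₊ : ℝ) / X
  set b := (⌈z.2 * X⌉₊ : ℝ) / X
  have u1 : z.1 < 1 := lt_of_le_of_ne (a1.trans p3) h1
  have v1 : z.2 < 1 := lt_of_le_of_ne (b1.trans p4) h2
  have pa : 0 < a := lt_of_lt_of_le p1 a1
  have pb : 0 < b := lt_of_lt_of_le p2 b1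
  have i1 := inv_bound X a b z.2 z.1 hX pa p1 v1 a1 a2 b3 p5
  have i2 := inv_bound X b a z.1 z.2 hX pb p2 u1 b1 b2 a3 (by linarith)
  have hd : domg z = 2 * ((Real.sqrt z.1)⁻¹ * (Real.sqrt (1 - z.2))⁻¹ + (Real.sqrt (1 - z.1))⁻¹ * (Real.sqrt z.2)⁻¹) := by
    unfold domg sq01 sq10
    have m1 : z.1 ∈ Set.Ioo (0 : ℝ) 1 := ⟨p1, u1⟩
    have m2 : z.2 ∈ Set.Ioo (0 : ℝ) 1 := ⟨p2, v1⟩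
    rw [Set.indicator_of_mem m1, Set.indicator_of_mem m1, Set.indicator_of_mem m2,
      Set.indicator_of_mem m2]
  have i3 : 1 / (a * b) ≤ 1 / a + 1 / b := by
    have : 1 / a + 1 / b = (a + b) * (1 / (a * b)) := by field_simp; ring
    rw [this]
    exact le_mul_of_one_le_left (by positivity) p5.le
  rw [Real.norm_of_nonneg (le_max_left _ _)]
  refine max_le dn ?_
  rw [hd]
  linarith

lemma Rs_tendsto (c : ℝ) (hc : 0 ≤ c) : Tendsto (Rs c) atTop (nhds (∫ z, Hl c z)) := by
  have h : Tendsto (fun X => ∫ z, Fs c X z) atTop (nhds (∫ z, Hl c z)) := by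
    refine tendsto_integral_filter_of_dominated_convergence domg ?_ ?_ domg_int ?_
    · exact Eventually.of_forall fun X => (Fs_meas c X).aestronglyMeasurable
    · filter_upwards [eventually_gt_atTop 0] with X hX
      filter_upwards [ae_good] with z hz
      exact Fs_dom c X hc hX z hz.1 hz.2.1
    · filter_upwards [ae_good] with z hz
      exact Fs_tendsto c z hz.1 hz.2.1 hz.2.2
  refine h.congr' ?_
  filter_upwards [eventually_gt_atTop 0] with X hX
  exact Fs_int c X hX

lemma Rs_bound (c X : ℝ) (hc : 0 ≤ c) (hX : 0 < X) : |Rs c X| ≤ ∫ z, domg z := by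
  rw [← Fs_int c X hX, ← Real.norm_eq_abs]
  refine norm_integral_le_of_norm_le domg_int ?_
  filter_upwards [ae_good] with z hz
  exact Fs_dom c X hc hX z hz.1 hz.2.1

lemma fareySum_eq (c T : ℝ) (hT : 0 < T) :
    ∑ x ∈ fareySet ⌊T⌋₊, gapw (c / T ^ 2) x.1 x.2 =
    ∑ e ∈ Finset.Icc 1 ⌊T⌋₊, ∑ e' ∈ Finset.Icc 1 ⌊T⌋₊, if Nat.Coprime e e' then Gw c T e e' else 0 := by
  unfold fareySet
  rw [Finset.sum_sigma]
  refine Finset.sum_congr rfl fun e he => ?_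
  rw [Finset.mem_Icc] at he
  rw [Finset.sum_filter]
  have hs : Finset.Ioc (⌊T⌋₊ - e) ⌊T⌋₊ ⊆ Finset.Icc 1 ⌊T⌋₊ := by
    intro a ha; rw [Finset.mem_Ioc] at ha; rw [Finset.mem_Icc]; omega
  rw [← Finset.sum_subset hs]
  · refine Finset.sum_congr rfl fun e' he' => ?_
    rw [Finset.mem_Ioc] at he'
    congr 1
    unfold Gw gapw
    rw [if_pos]
    refine ⟨he.1, by omega, (Nat.le_floor_iff hT.le).1 he.2, (Nat.le_floor_iff hT.le).1 he'.2, ?_⟩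
    have : ⌊T⌋₊ < e + e' := by omega
    have := (Nat.floor_lt hT.le).1 this
    exact_mod_cast this
  · intro e' h1 h2
    rw [Finset.mem_Icc] at h1
    rw [Finset.mem_Ioc] at h2
    have : Gw c T e e' = 0 := by
      unfold Gw
      rw [if_neg]
      rintro ⟨-, -, -, -, h⟩
      have : ⌊T⌋₊ < e + e' := (Nat.floor_lt hT.le).2 (by exact_mod_cast h)
      omega
    simp [this]

lemma coprime_moebius (N e e' : ℕ) (h1 : 1 ≤ e) (h2 : e ≤ N) (g : ℝ) :
    (if Nat.Coprime e e' then g else 0) =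
    ∑ d ∈ Finset.Icc 1 N, if d ∣ e ∧ d ∣ e' then (ArithmeticFunction.moebius d : ℝ) * g else 0 := by
  have h := congrArg (fun f : ArithmeticFunction ℤ => f (Nat.gcd e e')) ArithmeticFunction.moebius_mul_coe_zeta
  simp only [ArithmeticFunction.coe_mul_zeta_apply, ArithmeticFunction.one_apply] at h
  have hg : Nat.gcd e e' ≠ 0 := by
    intro h; have := Nat.eq_zero_of_gcd_eq_zero_left h; omega
  rw [← Finset.sum_filter]
  have hf : (Finset.Icc 1 N).filter (fun d => d ∣ e ∧ d ∣ e') = (Nat.gcd e e').divisors := by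
    ext d
    rw [Finset.mem_filter, Finset.mem_Icc, Nat.mem_divisors, Nat.dvd_gcd_iff]
    constructor
    · rintro ⟨-, h⟩; exact ⟨h, hg⟩
    · rintro ⟨h, -⟩
      refine ⟨⟨Nat.pos_of_dvd_of_pos h.1 h1, (Nat.le_of_dvd h1 h.1).trans h2⟩, h⟩
  rw [hf, ← Finset.sum_mul]
  have h' : (∑ i ∈ (Nat.gcd e e').divisors, (ArithmeticFunction.moebius i : ℝ)) = if Nat.gcd e e' = 1 then 1 else 0 := by
    exact_mod_cast h
  rw [h']
  simp only [Nat.Coprime]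
  split_ifs <;> simp

lemma sum_multiples (N d : ℕ) (hd : 1 ≤ d) (h : ℕ → ℝ) :
    ∑ e ∈ Finset.Icc 1 N, (if d ∣ e then h e else 0) = ∑ f ∈ Finset.Icc 1 (N / d), h (d * f) := by
  rw [← Finset.sum_filter]
  symm
  refine Finset.sum_bij (fun f _ => d * f) ?_ ?_ ?_ ?_
  · intro f hf
    rw [Finset.mem_Icc, Nat.le_div_iff_mul_le (by omega)] at hf
    rw [Finset.mem_filter, Finset.mem_Icc]
    refine ⟨⟨Nat.mul_pos hd hf.1, by rw [mul_comm]; exact hf.2⟩, Dvd.intro _ rfl⟩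
  · intro a _ b _ hab
    exact Nat.eq_of_mul_eq_mul_left hd hab
  · intro e he
    rw [Finset.mem_filter, Finset.mem_Icc] at he
    obtain ⟨⟨a, b⟩, f, rfl⟩ := he
    refine ⟨f, ?_, rfl⟩
    rw [Finset.mem_Icc, Nat.le_div_iff_mul_le (by omega)]
    exact ⟨Nat.pos_of_mul_pos_left a, by rw [mul_comm]; exact b⟩
  · intro _ _; rfl

lemma Gw_scale (c T : ℝ) (hT : 0 < T) (d f f' : ℕ) (hd : 1 ≤ d) :
    Gw c T (d * f) (d * f') = 1 / (d : ℝ) ^ 2 * Gw c (T / d) f f' := by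
  have d0 : (0 : ℝ) < d := by exact_mod_cast hd
  have hc : (1 ≤ d * f ∧ 1 ≤ d * f' ∧ ((d * f : ℕ) : ℝ) ≤ T ∧ ((d * f' : ℕ) : ℝ) ≤ T ∧
      T < ((d * f : ℕ) : ℝ) + ((d * f' : ℕ) : ℝ)) ↔
      (1 ≤ f ∧ 1 ≤ f' ∧ (f : ℝ) ≤ T / d ∧ (f' : ℝ) ≤ T / d ∧ T / d < (f : ℝ) + f') := by
    rw [le_div_iff₀ d0, le_div_iff₀ d0, div_lt_iff₀ d0]
    push_cast
    have : ∀ f : ℕ, 1 ≤ d * f ↔ 1 ≤ f := by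
      intro f
      constructor
      · intro h; exact Nat.pos_of_mul_pos_left h
      · intro h; exact Nat.mul_pos hd h
    rw [this, this]
    simp only [mul_comm (d : ℝ), add_mul]
  unfold Gw
  by_cases h : (1 ≤ f ∧ 1 ≤ f' ∧ (f : ℝ) ≤ T / d ∧ (f' : ℝ) ≤ T / d ∧ T / d < (f : ℝ) + f')
  · rw [if_pos h, if_pos (hc.2 h), mul_max_of_nonneg _ _ (by positivity), mul_zero]
    congr 1
    have : (0 : ℝ) < f := by exact_mod_cast h.1
    have : (0 : ℝ) < f' := by exact_mod_cast h.2.1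
    push_cast
    field_simp
  · rw [if_neg h, if_neg (fun h' => h (hc.1 h')), mul_zero]

lemma farey_moebius (c T : ℝ) (hT : 0 < T) :
    ∑ x ∈ fareySet ⌊T⌋₊, gapw (c / T ^ 2) x.1 x.2 =
    ∑ d ∈ Finset.Icc 1 ⌊T⌋₊, (ArithmeticFunction.moebius d : ℝ) / (d : ℝ) ^ 2 * Rs c (T / d) := by
  rw [fareySum_eq c T hT]
  have h1 : ∀ e ∈ Finset.Icc 1 ⌊T⌋₊, ∀ e' ∈ Finset.Icc 1 ⌊T⌋₊,
      (if Nat.Coprime e e' then Gw c T e e' else 0) =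
      ∑ d ∈ Finset.Icc 1 ⌊T⌋₊, if d ∣ e ∧ d ∣ e' then (ArithmeticFunction.moebius d : ℝ) * Gw c T e e' else 0 := by
    intro e he e' he'
    rw [Finset.mem_Icc] at he
    exact coprime_moebius _ e e' he.1 he.2 _
  rw [Finset.sum_congr rfl fun e he => Finset.sum_congr rfl fun e' he' => h1 e he e' he']
  rw [Finset.sum_congr rfl fun e he => Finset.sum_comm]
  rw [Finset.sum_comm]
  refine Finset.sum_congr rfl fun d hd => ?_
  rw [Finset.mem_Icc] at hd
  have h2 : ∀ e ∈ Finset.Icc 1 ⌊T⌋₊, (∑ e' ∈ Finset.Icc 1 ⌊T⌋₊,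
      if d ∣ e ∧ d ∣ e' then (ArithmeticFunction.moebius d : ℝ) * Gw c T e e' else 0) =
      if d ∣ e then ∑ f' ∈ Finset.Icc 1 (⌊T⌋₊ / d), (ArithmeticFunction.moebius d : ℝ) * Gw c T e (d * f') else 0 := by
    intro e _
    rw [← sum_multiples _ d hd.1 (fun e' => (ArithmeticFunction.moebius d : ℝ) * Gw c T e e')]
    split_ifs with h <;> simp [h]
  rw [Finset.sum_congr rfl h2, sum_multiples _ d hd.1
    (fun e => ∑ f' ∈ Finset.Icc 1 (⌊T⌋₊ / d), (ArithmeticFunction.moebius d : ℝ) * Gw c T e (d * f'))]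
  unfold Rs
  rw [← Nat.floor_div_natCast, Finset.mul_sum]
  refine Finset.sum_congr rfl fun f _ => ?_
  rw [Finset.mul_sum]
  refine Finset.sum_congr rfl fun f' _ => ?_
  rw [Gw_scale c T hT d f f' hd.1]
  ring

lemma tsum_moebius : ∑' d : ℕ, (ArithmeticFunction.moebius d : ℝ) / (d : ℝ) ^ 2 = 6 / Real.pi ^ 2 := by
  have h := ArithmeticFunction.LSeries_zeta_mul_Lseries_moebius (s := 2) (by norm_num)
  rw [ArithmeticFunction.LSeries_zeta_eq_riemannZeta (by norm_num), riemannZeta_two] at h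
  have e : LSeries (fun n => ((ArithmeticFunction.moebius n : ℤ) : ℂ)) 2 =
      ((∑' d : ℕ, (ArithmeticFunction.moebius d : ℝ) / (d : ℝ) ^ 2 : ℝ) : ℂ) := by
    rw [LSeries, Complex.ofReal_tsum]
    refine tsum_congr fun d => ?_
    rcases Nat.eq_zero_or_pos d with rfl | hd
    · simp
    · rw [LSeries.term_of_ne_zero (by omega)]
      push_cast
      norm_num
  rw [e] at h
  have hpi : (Real.pi ^ 2 / 6 : ℝ) ≠ 0 := by positivity
  have h' : (Real.pi ^ 2 / 6 : ℝ) * (∑' d : ℕ, (ArithmeticFunction.moebius d : ℝ) / (d : ℝ) ^ 2) = 1 := by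
    exact_mod_cast h
  field_simp at h' ⊢
  linarith

lemma main_term (c : ℝ) (hc : 0 ≤ c) : Tendsto (fun T : ℝ => ∑ x ∈ fareySet ⌊T⌋₊, gapw (c / T ^ 2) x.1 x.2) atTop
    (nhds (6 / Real.pi ^ 2 * ∫ z, Hl c z)) := by
  rw [← tsum_moebius, ← tsum_mul_right]
  have h : Tendsto (fun T : ℝ => ∑' d : ℕ, (ArithmeticFunction.moebius d : ℝ) / (d : ℝ) ^ 2 * Rs c (T / d)) atTop
    (nhds (∑' d : ℕ, (ArithmeticFunction.moebius d : ℝ) / (d : ℝ) ^ 2 * ∫ z, Hl c z)) := by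
    refine tendsto_tsum_of_dominated_convergence (bound := fun d : ℕ => 1 / (d : ℝ) ^ 2 * ∫ z, domg z) ?_ ?_ ?_
    · exact (Real.summable_one_div_nat_pow.2 (by norm_num)).mul_right _
    · intro d
      rcases Nat.eq_zero_or_pos d with rfl | hd
      · simp
      · refine Tendsto.const_mul _ ((Rs_tendsto c hc).comp ?_)
        exact tendsto_id.atTop_div_const (by exact_mod_cast hd)
    · filter_upwards [eventually_gt_atTop 0] with T hT d
      rcases Nat.eq_zero_or_pos d with rfl | hd
      · simp
      · have d0 : (0 : ℝ) < d := by exact_mod_cast hd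
        rw [norm_mul, Real.norm_eq_abs, Real.norm_eq_abs, abs_div, abs_of_pos (pow_pos d0 2)]
        have h1 := Rs_bound c (T / d) hc (by positivity)
        have h2 : |(ArithmeticFunction.moebius d : ℝ)| ≤ 1 := by
          exact_mod_cast ArithmeticFunction.abs_moebius_le_one
        gcongr
  refine h.congr' ?_
  filter_upwards [eventually_gt_atTop 0] with T hT
  rw [farey_moebius c T hT]
  refine tsum_eq_sum fun d hd => ?_
  rcases Nat.eq_zero_or_pos d with rfl | hd0
  · simp
  · have : Rs c (T / d) = 0 := by
      unfold Rs
      rw [Nat.floor_div_natCast, Nat.div_eq_of_lt]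
      · simp
      · by_contra hh
        push Not at hh
        exact hd (Finset.mem_Icc.2 ⟨hd0, hh⟩)
    rw [this, mul_zero]

noncomputable def fa (a u : ℝ) : ℝ := max 0 (min 1 (a / u) - (1 - u))

lemma fa_meas (a : ℝ) : Measurable (fa a) := by
  unfold fa; fun_prop

lemma fa_bound (a u : ℝ) (hu0 : 0 ≤ u) (hu1 : u ≤ 1) : |fa a u| ≤ 1 := by
  rw [abs_of_nonneg (le_max_left _ _)]
  refine max_le (by norm_num) ?_
  have := min_le_left 1 (a / u)
  linarith

lemma fa_ii (a x y : ℝ) (hx : 0 ≤ x) (hxy : x ≤ y) (hy : y ≤ 1) : IntervalIntegrable (fa a) volume x y := by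
  rw [intervalIntegrable_iff_integrableOn_Ioc_of_le hxy]
  refine Measure.integrableOn_of_bounded (M := 1) (by simp) (fa_meas a).aestronglyMeasurable ?_
  filter_upwards [ae_restrict_mem measurableSet_Ioc] with u hu
  exact fa_bound a u (by linarith [hu.1]) (by linarith [hu.2])

lemma piece1 (a x : ℝ) (hx : 0 ≤ x) (hxa : x ≤ a) (hx1 : x ≤ 1) : ∫ u in (0 : ℝ)..x, fa a u = x ^ 2 / 2 := by
  have : ∫ u in (0 : ℝ)..x, fa a u = ∫ u in (0 : ℝ)..x, u := by
    refine intervalIntegral.integral_congr_ae (ae_of_all _ fun u hu => ?_)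
    rw [Set.uIoc_of_le hx] at hu
    have h1 : 1 ≤ a / u := by rw [le_div_iff₀ hu.1]; linarith [hu.2]
    unfold fa
    rw [min_eq_left h1, max_eq_right (by linarith [hu.1])]
    ring
  rw [this, integral_id]; ring

noncomputable def ga (a u : ℝ) : ℝ := a * Real.log u - u + u ^ 2 / 2

lemma piece2 (a x y : ℝ) (hx : 0 < x) (hxy : x ≤ y) (hax : a ≤ x)
    (h : ∀ u, x ≤ u → u ≤ y → 0 ≤ u ^ 2 - u + a) : ∫ u in x..y, fa a u = ga a y - ga a x := by
  have e : ∫ u in x..y, fa a u = ∫ u in x..y, (a * u⁻¹ - 1 + u) := by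
    refine intervalIntegral.integral_congr_ae (ae_of_all _ fun u hu => ?_)
    rw [Set.uIoc_of_le hxy] at hu
    have u0 : 0 < u := by linarith [hu.1]
    have h1 : a / u ≤ 1 := by rw [div_le_iff₀ u0]; linarith [hu.1]
    have h2 := h u hu.1.le hu.2
    unfold fa
    rw [min_eq_right h1, max_eq_right]
    · ring
    · have : a / u - (1 - u) = (u ^ 2 - u + a) / u := by field_simp; ring
      rw [this]; positivity
  rw [e]
  refine intervalIntegral.integral_eq_sub_of_hasDerivAt ?_ ?_
  · intro u hu
    rw [Set.uIcc_of_le hxy] at hu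
    have u0 : u ≠ 0 := (lt_of_lt_of_le hx hu.1).ne'
    have := (((Real.hasDerivAt_log u0).const_mul a).sub (hasDerivAt_id u)).add ((hasDerivAt_pow 2 u).div_const 2)
    refine this.congr_deriv ?_
    norm_num
  · refine ContinuousOn.intervalIntegrable ?_
    rw [Set.uIcc_of_le hxy]
    intro u hu
    have u0 : u ≠ 0 := (lt_of_lt_of_le hx hu.1).ne'
    exact ContinuousAt.continuousWithinAt (by fun_prop (disch := assumption))

lemma piece3 (a x y : ℝ) (hx : 0 < x) (hxy : x ≤ y) 
    (h : ∀ u, x ≤ u → u ≤ y → u ^ 2 - u + a ≤ 0) : ∫ u in x..y, fa a u = 0 := by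
  have e : ∫ u in x..y, fa a u = ∫ u in x..y, (0 : ℝ) := by
    refine intervalIntegral.integral_congr_ae (ae_of_all _ fun u hu => ?_)
    rw [Set.uIoc_of_le hxy] at hu
    have u0 : 0 < u := by linarith [hu.1]
    have h2 := h u hu.1.le hu.2
    unfold fa
    rw [max_eq_left]
    have h3 := min_le_right 1 (a / u)
    have : a / u - (1 - u) = (u ^ 2 - u + a) / u := by field_simp; ring
    have h4 : (u ^ 2 - u + a) / u ≤ 0 := div_nonpos_of_nonpos_of_nonneg h2 u0.le
    linarith
  rw [e]; simp

noncomputable def areaf (a : ℝ) : ℝ := ∫ u in (0 : ℝ)..1, fa a u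

lemma area_ge_one (a : ℝ) (ha : 1 ≤ a) : areaf a = 1 / 2 := by
  unfold areaf
  rw [piece1 a 1 (by norm_num) ha le_rfl]; norm_num

lemma area_mid (a : ℝ) (ha : 1 / 4 ≤ a) (ha1 : a ≤ 1) : areaf a = -1 / 2 + a - a * Real.log a := by
  unfold areaf
  rw [← intervalIntegral.integral_add_adjacent_intervals (fa_ii a 0 a le_rfl (by linarith) ha1)
    (fa_ii a a 1 (by linarith) ha1 le_rfl), piece1 a a (by linarith) le_rfl ha1,
    piece2 a a 1 (by linarith) ha1 le_rfl]
  · unfold ga; simp; ring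
  · intro u _ _; nlinarith [sq_nonneg (u - 1/2)]

lemma area_small (a : ℝ) (ha : 0 < a) (ha1 : a ≤ 1 / 4) : areaf a =
    -1 / 2 + a + Real.sqrt (1 / 4 - a) - 2 * a * Real.log (1 / 2 + Real.sqrt (1 / 4 - a)) := by
  unfold areaf
  set r := Real.sqrt (1 / 4 - a) with hr
  have r0 : 0 ≤ r := Real.sqrt_nonneg _
  have r2 : r ^ 2 = 1 / 4 - a := Real.sq_sqrt (by linarith)
  have r1 : r < 1 / 2 := by nlinarith
  have hm : a ≤ 1 / 2 - r := by nlinarith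
  have s1 := intervalIntegral.integral_add_adjacent_intervals (fa_ii a 0 a le_rfl (by linarith) (by linarith))
    (fa_ii a a (1 / 2 - r) (by linarith) (by linarith) (by linarith))
  have s2 := intervalIntegral.integral_add_adjacent_intervals (fa_ii a 0 (1 / 2 - r) le_rfl (by linarith) (by linarith))
    (fa_ii a (1 / 2 - r) (1 / 2 + r) (by linarith) (by linarith) (by linarith))
  have s3 := intervalIntegral.integral_add_adjacent_intervals (fa_ii a 0 (1 / 2 + r) le_rfl (by linarith) (by linarith))
    (fa_ii a (1 / 2 + r) 1 (by linarith) (by linarith) (by linarith))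
  have q1 := piece1 a a (by linarith) le_rfl (by linarith)
  have q2 := piece2 a a (1 / 2 - r) ha hm le_rfl (by
    intro u h1 h2
    nlinarith)
  have q3 := piece3 a (1 / 2 - r) (1 / 2 + r) (by linarith) (by linarith) (by
    intro u h1 h2
    nlinarith)
  have q4 := piece2 a (1 / 2 + r) 1 (by linarith) (by linarith) (by linarith) (by
    intro u h1 h2
    nlinarith)
  rw [← s3, ← s2, ← s1, q1, q2, q3, q4]
  have hl : Real.log (1 / 2 - r) = Real.log a - Real.log (1 / 2 + r) := by
    rw [eq_sub_iff_add_eq, ← Real.log_mul (by linarith) (by linarith)]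
    congr 1
    nlinarith
  unfold ga
  rw [hl, Real.log_one]
  ring

lemma etaLog_area (s : ℝ) : etaLog s = 6 / Real.pi ^ 2 * (2 * Real.exp (2 * s) * areaf (Real.exp (-2 * s))) := by
  have he : Real.exp (2 * s) * Real.exp (-2 * s) = 1 := by rw [← Real.exp_add]; simp
  unfold etaLog
  split_ifs with h1 h2
  · rw [area_ge_one _ (Real.one_le_exp (by linarith))]; ring
  · rw [area_mid, Real.log_exp]
    · congr 1
      linear_combination (-2 - 4 * s) * he
    · rw [← Real.log_le_iff_le_exp (by norm_num)]
      have : Real.log (1 / 4) = - 2 * Real.log 2 := by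
        rw [one_div, Real.log_inv, show (4 : ℝ) = 2 ^ 2 by norm_num, Real.log_pow]; push_cast; ring
      rw [this]; linarith
    · exact Real.exp_le_one_iff.2 (by linarith)
  · rw [area_small _ (Real.exp_pos _)]
    · congr 1
      linear_combination (-2 + 4 * Real.log (1 / 2 + Real.sqrt (1 / 4 - Real.exp (-2 * s)))) * he
    · rw [← Real.le_log_iff_exp_le (by norm_num)]
      have : Real.log (1 / 4) = - 2 * Real.log 2 := by
        rw [one_div, Real.log_inv, show (4 : ℝ) = 2 ^ 2 by norm_num, Real.log_pow]; push_cast; ring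
      rw [this]; linarith

lemma areaf_nonneg (a : ℝ) : 0 ≤ areaf a :=
  intervalIntegral.integral_nonneg (by norm_num) fun _ _ => le_max_left _ _

lemma etaLog_nonneg (s : ℝ) : 0 ≤ etaLog s := by
  rw [etaLog_area]
  have := areaf_nonneg (Real.exp (-2 * s))
  positivity

lemma etaLog_meas : Measurable etaLog := by
  unfold etaLog
  refine Measurable.ite measurableSet_Iic (by fun_prop) (Measurable.ite measurableSet_Iic (by fun_prop) (by fun_prop))

def Om : Set (ℝ × ℝ) := {z | 0 < z.1 ∧ z.1 < 1 ∧ 0 < z.2 ∧ z.2 < 1 ∧ 1 < z.1 + z.2}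

lemma Om_meas : MeasurableSet Om := by
  unfold Om
  have m1 : MeasurableSet {z : ℝ × ℝ | 0 < z.1} := measurableSet_lt measurable_const measurable_fst
  have m2 : MeasurableSet {z : ℝ × ℝ | z.1 < 1} := measurableSet_lt measurable_fst measurable_const
  have m3 : MeasurableSet {z : ℝ × ℝ | 0 < z.2} := measurableSet_lt measurable_const measurable_snd
  have m4 : MeasurableSet {z : ℝ × ℝ | z.2 < 1} := measurableSet_lt measurable_snd measurable_const
  have m5 : MeasurableSet {z : ℝ × ℝ | 1 < z.1 + z.2} :=
    measurableSet_lt measurable_const (measurable_fst.add measurable_snd)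
  exact m1.inter (m2.inter (m3.inter (m4.inter m5)))

def Oma (a : ℝ) : Set (ℝ × ℝ) := Om ∩ {z | z.1 * z.2 < a}

lemma Oma_meas (a : ℝ) : MeasurableSet (Oma a) :=
  Om_meas.inter (measurableSet_lt (measurable_fst.mul measurable_snd) measurable_const)

lemma Oma_vol (a : ℝ) : volume (Oma a) = ENNReal.ofReal (areaf a) := by
  rw [Measure.volume_eq_prod, Measure.prod_apply (Oma_meas a)]
  have h : ∀ u, volume (Prod.mk u ⁻¹' Oma a) =
      (Set.Ioo (0 : ℝ) 1).indicator (fun u => ENNReal.ofReal (fa a u)) u := by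
    intro u
    by_cases hu : u ∈ Set.Ioo (0 : ℝ) 1
    · rw [Set.indicator_of_mem hu]
      have : Prod.mk u ⁻¹' Oma a = Set.Ioo (1 - u) (min 1 (a / u)) := by
        ext v
        simp only [Oma, Om, Set.mem_preimage, Set.mem_inter_iff, Set.mem_ofPred_eq, Set.mem_Ioo, lt_min_iff,
          lt_div_iff₀ hu.1]
        have := hu.1
        have := hu.2
        rw [mul_comm v u]
        constructor
        · rintro ⟨⟨a1, a2, a3, a4, a5⟩, a6⟩; exact ⟨by linarith, a4, a6⟩
        · rintro ⟨a1, a2, a3⟩; exact ⟨⟨hu.1, hu.2, by linarith, a2, by linarith⟩, a3⟩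
      rw [this, Real.volume_Ioo]
      unfold fa
      rw [ENNReal.ofReal_max]; simp
    · rw [Set.indicator_of_notMem hu]
      have : Prod.mk u ⁻¹' Oma a = ∅ := by
        ext v
        simp only [Oma, Om, Set.mem_preimage, Set.mem_inter_iff, Set.mem_ofPred_eq, Set.mem_empty_iff_false, iff_false]
        rintro ⟨⟨a1, a2, -⟩, -⟩
        exact hu ⟨a1, a2⟩
      rw [this]; simp
  simp_rw [h]
  rw [lintegral_indicator measurableSet_Ioo]
  unfold areaf
  have hii := fa_ii a 0 1 le_rfl (by norm_num) le_rfl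
  rw [intervalIntegrable_iff_integrableOn_Ioo_of_le (by norm_num)] at hii
  rw [intervalIntegral.integral_of_le (by norm_num), integral_Ioc_eq_integral_Ioo,
    ofReal_integral_eq_lintegral_ofReal hii (ae_of_all _ fun _ => le_max_left _ _)]

noncomputable def Ks (z : ℝ × ℝ) (s : ℝ) : ENNReal :=
  (Oma (Real.exp (-2 * s))).indicator (fun _ => ENNReal.ofReal (2 * Real.exp (2 * s))) z

lemma Ks_meas : Measurable (Function.uncurry Ks) := by
  have hs : MeasurableSet {p : (ℝ × ℝ) × ℝ | p.1 ∈ Oma (Real.exp (-2 * p.2))} := by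
    refine MeasurableSet.inter (measurable_fst Om_meas) ?_
    exact measurableSet_lt (f := fun p : (ℝ × ℝ) × ℝ => p.1.1 * p.1.2) (g := fun p => Real.exp (-2 * p.2))
      (by fun_prop) (by fun_prop)
  have : Function.uncurry Ks = {p : (ℝ × ℝ) × ℝ | p.1 ∈ Oma (Real.exp (-2 * p.2))}.indicator
      (fun p => ENNReal.ofReal (2 * Real.exp (2 * p.2))) := by
    ext ⟨z, s⟩
    rfl
  rw [this]
  exact Measurable.indicator (by fun_prop) hs

lemma exp_int (L M : ℝ) (h : L ≤ M) :
    ∫⁻ s in Set.Ioo L M, ENNReal.ofReal (2 * Real.exp (2 * s)) = ENNReal.ofReal (Real.exp (2 * M) - Real.exp (2 * L)) := by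
  have hc : Continuous (fun s : ℝ => 2 * Real.exp (2 * s)) := by fun_prop
  have e : ∫ s in L..M, 2 * Real.exp (2 * s) = Real.exp (2 * M) - Real.exp (2 * L) := by
    refine intervalIntegral.integral_eq_sub_of_hasDerivAt (f := fun s => Real.exp (2 * s)) ?_ (hc.intervalIntegrable _ _)
    intro s _
    have := ((hasDerivAt_id s).const_mul 2).exp
    refine this.congr_deriv ?_
    simp; ring
  rw [← e, intervalIntegral.integral_of_le h, integral_Ioc_eq_integral_Ioo,
    ofReal_integral_eq_lintegral_ofReal]
  · have := hc.intervalIntegrable (μ := volume) L M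
    rwa [intervalIntegrable_iff_integrableOn_Ioo_of_le h] at this
  · exact ae_of_all _ fun _ => by positivity

lemma Hl_lint (L : ℝ) (z : ℝ × ℝ) :
    ENNReal.ofReal (Hl (Real.exp (2 * L)) z) = ∫⁻ s in Set.Ioi L, Ks z s := by
  by_cases hz : z ∈ Om
  · have hz' : 0 < z.1 ∧ z.1 < 1 ∧ 0 < z.2 ∧ z.2 < 1 ∧ 1 < z.1 + z.2 := hz
    have w0 : 0 < z.1 * z.2 := mul_pos hz'.1 hz'.2.2.1
    set M := - Real.log (z.1 * z.2) / 2 with hM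
    have hK : ∀ s, Ks z s = (Set.Iio M).indicator (fun s => ENNReal.ofReal (2 * Real.exp (2 * s))) s := by
      intro s
      have : z ∈ Oma (Real.exp (-2 * s)) ↔ s ∈ Set.Iio M := by
        have : z ∈ Oma (Real.exp (-2 * s)) ↔ z.1 * z.2 < Real.exp (-2 * s) :=
          ⟨fun h => h.2, fun h => ⟨hz, h⟩⟩
        rw [this, ← Real.log_lt_iff_lt_exp w0, Set.mem_Iio, hM]
        constructor <;> intro h <;> linarith
      unfold Ks
      by_cases h : s ∈ Set.Iio M
      · rw [Set.indicator_of_mem h, Set.indicator_of_mem (this.2 h)]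
      · rw [Set.indicator_of_notMem h, Set.indicator_of_notMem (fun h' => h (this.1 h'))]
    simp_rw [hK]
    rw [lintegral_indicator measurableSet_Iio, Measure.restrict_restrict measurableSet_Iio, Set.inter_comm,
      Set.Ioi_inter_Iio, Hl, if_pos hz']
    have e2 : Real.exp (2 * M) = 1 / (z.1 * z.2) := by
      rw [hM, mul_div_cancel₀ _ (by norm_num), Real.exp_neg, Real.exp_log w0, one_div]
    rcases le_total L M with h | h
    · rw [exp_int L M h, e2, max_eq_right]
      rw [← e2, sub_nonneg]
      exact Real.exp_le_exp.2 (by linarith)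
    · rw [Set.Ioo_eq_empty (by linarith), max_eq_left]
      · simp
      · rw [← e2, sub_nonpos]
        exact Real.exp_le_exp.2 (by linarith)
  · have hz' : ¬ (0 < z.1 ∧ z.1 < 1 ∧ 0 < z.2 ∧ z.2 < 1 ∧ 1 < z.1 + z.2) := hz
    have hK : ∀ s, Ks z s = 0 := by
      intro s
      exact Set.indicator_of_notMem (fun h => hz h.1) _
    simp_rw [hK]
    rw [Hl, if_neg hz']; simp

lemma Hl_meas (c : ℝ) : Measurable (Hl c) := by
  unfold Hl
  exact Measurable.ite Om_meas (by fun_prop) measurable_const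

lemma Hl_nonneg (c : ℝ) (z : ℝ × ℝ) : 0 ≤ Hl c z := by
  unfold Hl
  split_ifs
  · exact le_max_left _ _
  · exact le_rfl

lemma density_identity (L : ℝ) :
    6 / Real.pi ^ 2 * ∫ z, Hl (Real.exp (2 * L)) z = ∫ s in Set.Ioi L, etaLog s := by
  rw [integral_eq_lintegral_of_nonneg_ae (ae_of_all _ (Hl_nonneg _)) (Hl_meas _).aestronglyMeasurable,
    integral_eq_lintegral_of_nonneg_ae (ae_of_all _ etaLog_nonneg) etaLog_meas.aestronglyMeasurable]
  simp_rw [Hl_lint]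
  rw [lintegral_lintegral_swap Ks_meas.aemeasurable]
  have h : ∀ s, ∫⁻ z, Ks z s = ENNReal.ofReal (2 * Real.exp (2 * s) * areaf (Real.exp (-2 * s))) := by
    intro s
    unfold Ks
    rw [lintegral_indicator (Oma_meas _), lintegral_const, Measure.restrict_apply_univ, Oma_vol,
      ← ENNReal.ofReal_mul (by positivity)]
  simp_rw [h]
  have hp : (0 : ℝ) ≤ 6 / Real.pi ^ 2 := by positivity
  have h2 : ∀ s, ENNReal.ofReal (etaLog s) = ENNReal.ofReal (6 / Real.pi ^ 2) *
      ENNReal.ofReal (2 * Real.exp (2 * s) * areaf (Real.exp (-2 * s))) := by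
    intro s
    rw [etaLog_area, ENNReal.ofReal_mul hp]
  simp_rw [h2]
  rw [lintegral_const_mul' _ _ (by simp), ENNReal.toReal_mul, ENNReal.toReal_ofReal hp]

lemma approx_tendsto (φ : ℝ → ℂ) (a : ℂ) (K : ℝ) (hK : 0 ≤ K)
    (h : ∀ ε > 0, ∃ (ψ : ℝ → ℂ) (b : ℂ), Tendsto ψ atTop (nhds b) ∧ (∀ T, ‖φ T - ψ T‖ ≤ ε) ∧ ‖a - b‖ ≤ K * ε) :
    Tendsto φ atTop (nhds a) := by
  rw [Metric.tendsto_nhds]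
  intro ε hε
  obtain ⟨ψ, b, h1, h2, h3⟩ := h (ε / (2 * (K + 2))) (by positivity)
  rw [Metric.tendsto_nhds] at h1
  filter_upwards [h1 (ε / 2) (by positivity)] with T hT
  have h2 := h2 T
  rw [dist_eq_norm] at *
  have e : φ T - a = (φ T - ψ T) + (ψ T - b) - (a - b) := by ring
  rw [e]
  refine (norm_sub_le _ _).trans_lt ?_
  have := norm_add_le (φ T - ψ T) (ψ T - b)
  have hk : ε / (2 * (K + 2)) + K * (ε / (2 * (K + 2))) < ε / 2 := by
    have : ε / 2 = (K + 2) * (ε / (2 * (K + 2))) := by field_simp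
    rw [this]
    have : 0 < ε / (2 * (K + 2)) := by positivity
    linarith
  linarith

lemma fourier_int (k : ℤ) : ∫ t in Set.Ioc (0 : ℝ) 1, Complex.exp (2 * Real.pi * Complex.I * k * (t : ℝ)) =
    if k = 0 then 1 else 0 := by
  rw [← intervalIntegral.integral_of_le (by norm_num)]
  split_ifs with hk
  · subst hk; simp
  · have hc : (2 * Real.pi * Complex.I * k : ℂ) ≠ 0 := by
      have := Real.pi_ne_zero
      have : (k : ℂ) ≠ 0 := by exact_mod_cast hk
      simp_all
    rw [integral_exp_mul_complex hc]
    have : Complex.exp (2 * Real.pi * Complex.I * k) = 1 := by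
      rw [Complex.exp_eq_one_iff]; exact ⟨k, by ring⟩
    simp [this]

lemma circ_ii (f : C(UnitAddCircle, ℂ)) (s : Set ℝ) (hs : s ⊆ Set.Ioc 0 1) :
    IntegrableOn (fun t : ℝ => f (t : UnitAddCircle)) s := by
  have hc : Continuous (fun t : ℝ => f (t : UnitAddCircle)) :=
    f.continuous.comp (AddCircle.continuous_mk' 1)
  have := (hc.continuousOn (s := Set.Icc 0 1)).integrableOn_Icc (μ := volume)
  exact this.mono_set (hs.trans Set.Ioc_subset_Icc_self)

lemma weak_span (A : ℝ → Set ℝ) (P : ℝ) (hA : ∀ T, A T ⊆ Set.Ioc 0 1)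
    (hF : ∀ k : ℤ, Tendsto (fun T => ∫ t in A T, Complex.exp (2 * Real.pi * Complex.I * k * (t : ℝ))) atTop
      (nhds (if k = 0 then (P : ℂ) else 0)))
    (f : C(UnitAddCircle, ℂ)) (hf : f ∈ Submodule.span ℂ (Set.range (@fourier 1))) :
    Tendsto (fun T => ∫ t in A T, f (t : UnitAddCircle)) atTop
      (nhds (P * ∫ t in Set.Ioc (0 : ℝ) 1, f (t : UnitAddCircle))) := by
  induction hf using Submodule.span_induction with
  | mem f hf =>
    obtain ⟨k, rfl⟩ := hf
    have e : ∀ t : ℝ, (fourier k (t : UnitAddCircle) : ℂ) = Complex.exp (2 * Real.pi * Complex.I * k * (t : ℝ)) := by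
      intro t
      rw [fourier_coe_apply]; simp
    simp_rw [e]
    rw [fourier_int k]
    simpa using hF k
  | zero => simp
  | add f g _ _ h1 h2 =>
    simp only [ContinuousMap.add_apply]
    rw [integral_add (circ_ii f _ le_rfl) (circ_ii g _ le_rfl), mul_add]
    refine (h1.add h2).congr fun T => ?_
    rw [integral_add (circ_ii f _ (hA T)) (circ_ii g _ (hA T))]
  | smul c f _ h1 =>
    simp only [ContinuousMap.smul_apply, smul_eq_mul]
    rw [integral_const_mul, mul_left_comm]
    refine (h1.const_mul c).congr fun T => ?_
    rw [integral_const_mul]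

lemma set_int_close (F G : ℝ → ℂ) (s : Set ℝ) (hs : s ⊆ Set.Ioc 0 1) (hF : IntegrableOn F (Set.Ioc 0 1))
    (hG : IntegrableOn G (Set.Ioc 0 1)) (ε : ℝ) (h : ∫ t in Set.Ioc (0 : ℝ) 1, ‖F t - G t‖ ≤ ε) :
    ‖(∫ t in s, F t) - ∫ t in s, G t‖ ≤ ε := by
  rw [← integral_sub (hF.mono_set hs) (hG.mono_set hs)]
  refine (norm_integral_le_integral_norm _).trans (le_trans ?_ h)
  refine setIntegral_mono_set (hF.sub hG).norm (ae_of_all _ fun t => norm_nonneg _) (Eventually.of_forall hs)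

lemma weak_cont (A : ℝ → Set ℝ) (P : ℝ) (hA : ∀ T, A T ⊆ Set.Ioc 0 1)
    (hF : ∀ k : ℤ, Tendsto (fun T => ∫ t in A T, Complex.exp (2 * Real.pi * Complex.I * k * (t : ℝ))) atTop
      (nhds (if k = 0 then (P : ℂ) else 0)))
    (f : C(UnitAddCircle, ℂ)) :
    Tendsto (fun T => ∫ t in A T, f (t : UnitAddCircle)) atTop
      (nhds (P * ∫ t in Set.Ioc (0 : ℝ) 1, f (t : UnitAddCircle))) := by
  refine approx_tendsto _ _ |P| (abs_nonneg _) fun ε hε => ?_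
  have hf : f ∈ (Submodule.span ℂ (Set.range (@fourier 1))).topologicalClosure := by
    rw [span_fourier_closure_eq_top]; trivial
  rw [← SetLike.mem_coe, Submodule.topologicalClosure_coe, Metric.mem_closure_iff] at hf
  obtain ⟨g, hg, hfg⟩ := hf ε hε
  have hb : ∫ t in Set.Ioc (0 : ℝ) 1, ‖f (t : UnitAddCircle) - g (t : UnitAddCircle)‖ ≤ ε := by
    have : ∫ t in Set.Ioc (0 : ℝ) 1, ‖f (t : UnitAddCircle) - g (t : UnitAddCircle)‖ ≤ ∫ t in Set.Ioc (0 : ℝ) 1, ε := by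
      refine integral_mono ((circ_ii f _ le_rfl).sub (circ_ii g _ le_rfl)).norm (by simp) fun t => ?_
      have := (f - g).norm_coe_le_norm (t : UnitAddCircle)
      rw [dist_eq_norm] at hfg
      exact this.trans hfg.le
    simpa using this
  refine ⟨_, _, weak_span A P hA hF g hg, fun T => ?_, ?_⟩
  · exact set_int_close _ _ _ (hA T) (circ_ii f _ le_rfl) (circ_ii g _ le_rfl) ε hb
  · rw [← mul_sub, norm_mul, Complex.norm_real, Real.norm_eq_abs]
    gcongr
    exact set_int_close _ _ _ le_rfl (circ_ii f _ le_rfl) (circ_ii g _ le_rfl) ε hb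

lemma weak_set (A : ℝ → Set ℝ) (P : ℝ) (hA : ∀ T, A T ⊆ Set.Ioc 0 1)
    (hF : ∀ k : ℤ, Tendsto (fun T => ∫ t in A T, Complex.exp (2 * Real.pi * Complex.I * k * (t : ℝ))) atTop
      (nhds (if k = 0 then (P : ℂ) else 0)))
    (D : Set ℝ) (hD : MeasurableSet D) :
    Tendsto (fun T => volume.real (A T ∩ D)) atTop (nhds (P * volume.real (Set.Ioc 0 1 ∩ D))) := by
  set I : ℝ → ℂ := D.indicator (fun _ => 1) with hI
  have Im : Measurable I := measurable_const.indicator hD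
  set F : UnitAddCircle → ℂ := fun b => I ((AddCircle.measurableEquivIoc 1 0 b : Set.Ioc (0 : ℝ) (0 + 1)) : ℝ) with hFd
  have Fm : Measurable F := Im.comp (measurable_subtype_coe.comp (AddCircle.measurableEquivIoc 1 0).measurable)
  have Fb : ∀ b, ‖F b‖ ≤ 1 := by
    intro b
    simp only [hFd, hI]
    refine (norm_indicator_le_norm_self _ _).trans ?_
    simp
  have Fi : Integrable F := Integrable.of_bound Fm.aestronglyMeasurable 1 (ae_of_all _ Fb)
  have Fc : ∀ t ∈ Set.Ioc (0 : ℝ) 1, F (t : UnitAddCircle) = I t := by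
    intro t ht
    have := AddCircle.liftIoc_coe_apply (p := (1 : ℝ)) (a := 0) (f := I) (x := t) (by simpa using ht)
    exact this
  have Ii : IntegrableOn I (Set.Ioc 0 1) := by
    refine Measure.integrableOn_of_bounded (M := 1) (by simp) Im.aestronglyMeasurable (ae_of_all _ fun t => ?_)
    simp only [hI]
    refine (norm_indicator_le_norm_self _ _).trans ?_
    simp
  have key : Tendsto (fun T => ∫ t in A T, I t) atTop (nhds (P * ∫ t in Set.Ioc (0 : ℝ) 1, I t)) := by
    refine approx_tendsto _ _ |P| (abs_nonneg _) fun ε hε => ?_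
    obtain ⟨g, hg, -⟩ := Fi.exists_boundedContinuous_integral_sub_le hε
    have hb : ∫ t in Set.Ioc (0 : ℝ) 1, ‖I t - g.toContinuousMap (t : UnitAddCircle)‖ ≤ ε := by
      refine le_trans (le_of_eq ?_) hg
      rw [← UnitAddCircle.integral_preimage 0, zero_add]
      refine setIntegral_congr_fun measurableSet_Ioc fun t ht => ?_
      simp only [Fc t ht]
      rfl
    refine ⟨_, _, weak_cont A P hA hF g.toContinuousMap, fun T => ?_, ?_⟩
    · exact set_int_close _ _ _ (hA T) Ii (circ_ii _ _ le_rfl) ε hb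
    · rw [← mul_sub, norm_mul, Complex.norm_real, Real.norm_eq_abs]
      gcongr
      exact set_int_close _ _ _ le_rfl Ii (circ_ii _ _ le_rfl) ε hb
  have ev : ∀ s : Set ℝ, ∫ t in s, I t = ((volume.real (s ∩ D) : ℝ) : ℂ) := by
    intro s
    rw [hI, setIntegral_indicator hD, setIntegral_const]
    simp
  simp_rw [ev] at key
  rw [← Complex.ofReal_mul] at key
  exact (Complex.continuous_re.tendsto _).comp key

lemma bound_tendsto (C K : ℝ) : Tendsto (fun N : ℕ =>
    C * ((N : ℝ) ^ ((23 : ℝ) / 24) * (2 + Real.log N) * ((1 + Real.log N) / N)) + K / N) atTop (nhds 0) := by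
  have h : Tendsto (fun x : ℝ =>
    C * (x ^ ((23 : ℝ) / 24) * (2 + Real.log x) * ((1 + Real.log x) / x)) + K / x) atTop (nhds 0) := by
    have h0 : Tendsto (fun x : ℝ => x ^ (-(1 / 48) : ℝ)) atTop (nhds 0) := tendsto_rpow_neg_atTop (by norm_num)
    have h1 : Tendsto (fun x : ℝ => Real.log x * x ^ (-(1 / 48) : ℝ)) atTop (nhds 0) := by
      have := (isLittleO_log_rpow_atTop (r := 1 / 48) (by norm_num)).tendsto_div_nhds_zero
      refine this.congr' ?_
      filter_upwards [eventually_gt_atTop 0] with x hx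
      rw [Real.rpow_neg hx.le, div_eq_mul_inv]
    have h2 : Tendsto (fun x : ℝ => K / x) atTop (nhds 0) := tendsto_const_nhds.div_atTop tendsto_id
    have h3 := ((((h0.const_mul 2).add h1).mul (h0.add h1)).const_mul C).add h2
    simp only [mul_zero, add_zero] at h3
    refine h3.congr' ?_
    filter_upwards [eventually_gt_atTop 0] with x hx
    have e : x ^ ((23 : ℝ) / 24) = x * (x ^ (-(1 / 48) : ℝ) * x ^ (-(1 / 48) : ℝ)) := by
      rw [← Real.rpow_add hx, ← Real.rpow_one_add' hx.le (by norm_num)]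
      norm_num
    rw [e]
    field_simp
  exact h.comp tendsto_natCast_atTop_atTop

lemma fourier_limit (c : ℝ) (hc : 0 < c) (k : ℤ) (P : ℝ)
    (hP : P = 6 / Real.pi ^ 2 * ∫ z, Hl c z) :
    Tendsto (fun T : ℝ => ∫ t in Set.Ioo (0 : ℝ) 1 ∩ avoid ⌊T⌋₊ (c / T ^ 2),
      Complex.exp (2 * Real.pi * Complex.I * k * (t : ℝ))) atTop (nhds (if k = 0 then (P : ℂ) else 0)) := by
  split_ifs with hk
  · subst hk
    have h := main_term c hc.le
    rw [← hP] at h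
    have h' := (Complex.continuous_ofReal.tendsto _).comp h
    refine h'.congr' ?_
    filter_upwards [eventually_ge_atTop 1] with T hT
    have : 1 ≤ ⌊T⌋₊ := Nat.le_floor (by simpa using hT)
    simp only [Function.comp]
    rw [sum_gapw_le _ this _ (by positivity)]
    simp
  · obtain ⟨C, hC, hb⟩ := farey_exp_sum_bound k hk
    have hlim := (bound_tendsto C (2 * Real.pi * |(k : ℝ)|)).comp (tendsto_nat_floor_atTop (α := ℝ))
    refine squeeze_zero_norm' ?_ hlim
    filter_upwards [eventually_ge_atTop 1] with T hT
    have hN : 1 ≤ ⌊T⌋₊ := Nat.le_floor (by simpa using hT)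
    have h1 := fourier_avoid k _ hN (c / T ^ 2) (by positivity)
    have h2 := hb ⌊T⌋₊ (c / T ^ 2) (by positivity) hN
    have := norm_le_norm_sub_add (∫ t in Set.Ioo (0 : ℝ) 1 ∩ avoid ⌊T⌋₊ (c / T ^ 2),
      Complex.exp (2 * Real.pi * Complex.I * k * (t : ℝ))) (∑ x ∈ fareySet ⌊T⌋₊, (gapw (c / T ^ 2) x.1 x.2 : ℂ) *
      Complex.exp (2 * Real.pi * Complex.I * k * ((farP x.1 x.2 : ℝ) / (x.1 : ℝ) : ℝ)))
    simp only [Function.comp]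
    linarith

lemma qmin_gt_iff (x δ : ℝ) (hδ : 0 < δ) (N : ℕ) : N < qmin x δ ↔ x ∈ avoid N δ := by
  have hne : {q : ℕ | 0 < q ∧ ∃ p : ℤ, x - δ / 2 < (p : ℝ) / q ∧ (p : ℝ) / q < x + δ / 2}.Nonempty := by
    obtain ⟨r, h1, h2⟩ := exists_rat_btwn (show x - δ / 2 < x + δ / 2 by linarith)
    refine ⟨r.den, r.den_pos, r.num, ?_⟩
    have : (r : ℝ) = (r.num : ℝ) / r.den := Rat.cast_def r
    rw [← this]
    exact ⟨h1, h2⟩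
  constructor
  · intro h q hq hqN p
    by_contra hh
    push Not at hh
    rw [abs_lt] at hh
    have : qmin x δ ≤ q := Nat.sInf_le ⟨hq, p, by linarith, by linarith⟩
    omega
  · intro h
    by_contra hh
    push Not at hh
    obtain ⟨h1, p, h2, h3⟩ := Nat.sInf_mem hne
    have := h _ h1 hh p
    have h4 : |x - p / (qmin x δ : ℕ)| < δ / 2 := by
      rw [abs_lt]
      unfold qmin
      constructor <;> linarith
    unfold qmin at h4
    linarith

lemma log_iff (x δ L : ℝ) (hδ : 0 < δ) :
    L - (1 / 2) * Real.log δ < Real.log (qmin x δ) ↔ x ∈ avoid ⌊Real.exp L / Real.sqrt δ⌋₊ δ := by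
  have hs : 0 < Real.sqrt δ := Real.sqrt_pos.2 hδ
  have hq : 0 < qmin x δ := by
    rw [qmin_gt_iff x δ hδ]
    intro q h1 h2; omega
  have hq' : (0 : ℝ) < qmin x δ := by exact_mod_cast hq
  rw [← qmin_gt_iff x δ hδ, Nat.floor_lt (by positivity), ← Real.log_lt_log_iff (by positivity) hq',
    Real.log_div (Real.exp_pos L).ne' hs.ne', Real.log_exp, Real.log_sqrt hδ.le]
  have : L - 1 / 2 * Real.log δ = L - Real.log δ / 2 := by ring
  rw [this]

theorem smallest_denominator_log_limit_law
    (D : Set ℝ) (hD : D ⊆ Set.Icc 0 1) (hDI : D.OrdConnected) (L : ℝ) :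
    Tendsto (fun δ : ℝ =>
        (volume {x ∈ D | L - (1 / 2) * Real.log δ < Real.log (qmin x δ)}).toReal)
      (nhdsWithin 0 (Set.Ioi 0))
      (nhds ((volume D).toReal * ∫ s in Set.Ioi L, etaLog s)) := by
  have hDm : MeasurableSet D := hDI.measurableSet
  have hw := weak_set (fun T => Set.Ioo (0 : ℝ) 1 ∩ avoid ⌊T⌋₊ (Real.exp (2 * L) / T ^ 2)) 
    (∫ s in Set.Ioi L, etaLog s) (fun T => Set.inter_subset_left.trans Set.Ioo_subset_Ioc_self)
    (fun k => fourier_limit (Real.exp (2 * L)) (Real.exp_pos _) k _ (density_identity L).symm) D hDm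
  have hT : Tendsto (fun δ : ℝ => Real.exp L / Real.sqrt δ) (nhdsWithin 0 (Set.Ioi 0)) atTop := by
    refine Tendsto.const_mul_atTop (Real.exp_pos L) ?_
    refine tendsto_inv_nhdsGT_zero.comp ?_
    refine tendsto_nhdsWithin_of_tendsto_nhds_of_eventually_within _ ?_ ?_
    · have := Real.continuous_sqrt.tendsto 0
      rw [Real.sqrt_zero] at this
      exact this.mono_left nhdsWithin_le_nhds
    · filter_upwards [self_mem_nhdsWithin] with δ hδ
      exact Real.sqrt_pos.2 hδ
  have h := hw.comp hT
  have n0 : ∀ᵐ t : ℝ, t ≠ 0 := Measure.ae_ne volume 0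
  have n1 : ∀ᵐ t : ℝ, t ≠ 1 := Measure.ae_ne volume 1
  have e1 : volume.real (Set.Ioc 0 1 ∩ D) = (volume D).toReal := by
    rw [measureReal_def]
    congr 1
    apply measure_congr
    filter_upwards [n0] with t ht
    apply propext
    constructor
    · intro h; exact h.2
    · intro h; exact ⟨⟨lt_of_le_of_ne (hD h).1 (Ne.symm ht), (hD h).2⟩, h⟩
  rw [e1, mul_comm (∫ s in Set.Ioi L, etaLog s)] at h
  refine h.congr' ?_
  filter_upwards [self_mem_nhdsWithin] with δ hδ
  have hδ : 0 < δ := hδ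
  simp only [Function.comp]
  have e2 : Real.exp (2 * L) / (Real.exp L / Real.sqrt δ) ^ 2 = δ := by
    rw [div_pow, Real.sq_sqrt hδ.le, ← Real.exp_nat_mul]
    push_cast
    have := Real.exp_pos (2 * L)
    field_simp
  rw [e2, measureReal_def]
  congr 1
  apply measure_congr
  filter_upwards [n0, n1] with t h0 h1
  apply propext
  constructor
  · rintro ⟨⟨-, h⟩, hd⟩; exact ⟨hd, (log_iff t δ L hδ).2 h⟩
  · rintro ⟨hd, h⟩
    exact ⟨⟨⟨lt_of_le_of_ne (hD hd).1 (Ne.symm h0), lt_of_le_of_ne (hD hd).2 h1⟩, (log_iff t δ L hδ).1 h⟩, hd⟩
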